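/- arXiv:1907.07447 — 5 statements merged into one kernel-verified Lean document; each statement's English description precedes it below -/
import Mathlib

section
/- For the Hermite-type weight W(x) = e^{−x²} L(x)L(x)*, the squared norms ℋ(n) of the monic MVOPs are diagonal matrices for every n ≥ 0, and the recurrence coefficients C(n) = ℋ(n)ℋ(n−1)⁻¹ are diagonal for every n ≥ 1. -/
open MeasureTheory Matrix Finset
open scoped ComplexOrder

/-- The physicists' Hermite polynomials, as functions on `ℝ`:
`H_0 = 1`, `H_1(x) = 2x`, `H_{m+1}(x) = 2x H_m(x) − 2m H_{m−1}(x)`. -/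
noncomputable def hermiteF : ℕ → ℝ → ℝ
  | 0, _ => 1
  | 1, x => 2 * x
  | (m + 2), x => 2 * x * hermiteF (m + 1) x - 2 * (m + 1) * hermiteF m x

/-- Entrywise integral of a matrix-valued function on `ℝ`. -/
noncomputable def matInt (N : ℕ) (F : ℝ → Matrix (Fin N) (Fin N) ℂ) :
    Matrix (Fin N) (Fin N) ℂ :=
  Matrix.of fun i j => ∫ y : ℝ, F y i j

/-- Entrywise derivative of a matrix-valued function on `ℝ`. -/
noncomputable def matDeriv (N : ℕ) (F : ℝ → Matrix (Fin N) (Fin N) ℂ) (x : ℝ) :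
    Matrix (Fin N) (Fin N) ℂ :=
  Matrix.of fun i j => deriv (fun y => F y i j) x

/-- `F` is a matrix polynomial of degree `n` with leading coefficient the identity. -/
def IsMonicMatPoly (N n : ℕ) (F : ℝ → Matrix (Fin N) (Fin N) ℂ) : Prop :=
  ∃ c : ℕ → Matrix (Fin N) (Fin N) ℂ, c n = 1 ∧
    ∀ x : ℝ, F x = ∑ k ∈ Finset.range (n + 1), ((x : ℂ) ^ k) • c k

/-- The matrix-valued inner product `⟨H, G⟩ = ∫ H(y) W(y) G(y)* dy`. -/
noncomputable def matIP (N : ℕ) (W H G : ℝ → Matrix (Fin N) (Fin N) ℂ) :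
    Matrix (Fin N) (Fin N) ℂ :=
  matInt N fun y => H y * W y * (G y)ᴴ

/-- The lower triangular matrix `L(x)` with entries
`L(x)_{jk} = (H_{j−k}(x)/(j−k)!)·(α_j/α_k)` for `j ≥ k` (here `0`-based indices). -/
noncomputable def Lmat (N : ℕ) (α : Fin N → ℝ) (x : ℝ) : Matrix (Fin N) (Fin N) ℂ :=
  Matrix.of fun j k =>
    if (k : ℕ) ≤ (j : ℕ) then
      ((hermiteF ((j : ℕ) - (k : ℕ)) x / Nat.factorial ((j : ℕ) - (k : ℕ)) *
          (α j / α k) : ℝ) : ℂ)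
    else 0

/-- The Hermite-type matrix weight `W(x) = e^{−x²} L(x)L(x)*`. -/
noncomputable def hermW (N : ℕ) (α : Fin N → ℝ) (x : ℝ) : Matrix (Fin N) (Fin N) ℂ :=
  Real.exp (-x ^ 2) • (Lmat N α x * (Lmat N α x)ᴴ)

/-- The nilpotent shift matrix `A` with `A_{j,j−1} = 2α_j/α_{j−1}` (1-based), i.e.
(0-based) `A j k = 2 α_j / α_k` when `j = k + 1`. -/
noncomputable def Amat (N : ℕ) (α : Fin N → ℝ) : Matrix (Fin N) (Fin N) ℂ :=
  Matrix.of fun j k => if (j : ℕ) = (k : ℕ) + 1 then ((2 * α j / α k : ℝ) : ℂ) else 0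

/-- The diagonal matrix `J = diag(1, 2, …, N)`. -/
def Jmat (N : ℕ) : Matrix (Fin N) (Fin N) ℂ :=
  Matrix.diagonal fun j => ((j : ℕ) + 1 : ℂ)

open Polynomial in
/-- Hermite polynomials over `ℂ`. -/
noncomputable def hermP : ℕ → ℂ[X]
  | 0 => 1
  | 1 => 2 * X
  | (m + 2) => 2 * X * hermP (m + 1) - 2 * ((m : ℂ[X]) + 1) * hermP m

open Polynomial in
lemma hermP_eval (m : ℕ) (x : ℝ) : (hermP m).eval (x : ℂ) = ((hermiteF m x : ℝ) : ℂ) := by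
  induction m using Nat.strong_induction_on with
  | _ m ih =>
    match m, ih with
    | 0, _ => simp [hermP, hermiteF]
    | 1, _ => simp [hermP, hermiteF]
    | (m + 2), ih =>
      simp [hermP, hermiteF, ih (m + 1) (by omega), ih m (by omega)]

open Polynomial in
lemma hermP_deriv (m : ℕ) :
    derivative (hermP m) = 2 * (m : ℂ[X]) * hermP (m - 1) := by
  induction m using Nat.strong_induction_on with
  | _ m ih =>
    match m, ih with
    | 0, _ => simp [hermP]
    | 1, _ => simp [hermP]
    | 2, _ => simp [hermP]; ring
    | (m + 3), ih =>
      have h1 := ih (m + 2) (by omega)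
      have h2 := ih (m + 1) (by omega)
      rw [hermP]
      simp only [derivative_sub, derivative_mul, h1, h2, derivative_X, derivative_ofNat,
        derivative_add, derivative_natCast, derivative_one]
      have h3 : m + 2 - 1 = m + 1 := by omega
      have h4 : m + 1 - 1 = m := by omega
      have h5 : m + 3 - 1 = m + 2 := by omega
      rw [h3, h4, h5, hermP]
      push_cast
      ring

open Polynomial in
lemma hermP_ode (m : ℕ) :
    derivative (derivative (hermP m)) - 2 * X * derivative (hermP m)
      + 2 * (m : ℂ[X]) * hermP m = 0 := by
  match m with
  | 0 => simp [hermP]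
  | 1 => simp [hermP]; ring
  | (m + 2) =>
    have h3 : m + 2 - 1 = m + 1 := by omega
    have h4 : m + 1 - 1 = m := by omega
    simp only [hermP_deriv, h3, h4, derivative_mul, derivative_natCast, derivative_ofNat]
    rw [hermP]
    push_cast
    ring

/-- Conjugation of coefficients. -/
noncomputable def pbar : Polynomial ℂ →+* Polynomial ℂ := Polynomial.mapRingHom (starRingEnd ℂ)

lemma pbar_eval (p : Polynomial ℂ) (x : ℝ) :
    (pbar p).eval (x : ℂ) = (starRingEnd ℂ) (p.eval (x : ℂ)) := by
  have := Polynomial.eval_map_apply (f := starRingEnd ℂ) (p := p) (x : ℂ)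
  simpa [pbar] using this

lemma pbar_pbar (p : Polynomial ℂ) : pbar (pbar p) = p := by
  ext n; simp [pbar]

lemma pbar_deriv (p : Polynomial ℂ) :
    pbar (Polynomial.derivative p) = Polynomial.derivative (pbar p) := by
  simp [pbar, Polynomial.derivative_map]

lemma integrable_poly (p : Polynomial ℂ) :
    Integrable (fun x : ℝ => p.eval (x : ℂ) * ((Real.exp (-x ^ 2) : ℝ) : ℂ)) := by
  induction p using Polynomial.induction_on' with
  | add p q hp hq =>
    simp only [Polynomial.eval_add, add_mul]
    exact hp.add hq
  | monomial n a =>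
    have h := integrable_rpow_mul_exp_neg_mul_sq (b := 1) one_pos (s := (n : ℝ))
      (by have : (0 : ℝ) ≤ n := Nat.cast_nonneg n
          linarith)
    have h2 := (h.ofReal (𝕜 := ℂ)).const_mul a
    refine h2.congr (Filter.Eventually.of_forall fun x => ?_)
    simp [mul_assoc]

/-- The moment functional of the Gaussian. -/
noncomputable def gI : Polynomial ℂ →ₗ[ℂ] ℂ where
  toFun p := ∫ x : ℝ, p.eval (x : ℂ) * ((Real.exp (-x ^ 2) : ℝ) : ℂ)
  map_add' p q := by
    simp only [Polynomial.eval_add, add_mul]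
    exact integral_add (integrable_poly p) (integrable_poly q)
  map_smul' a p := by
    simp only [Polynomial.eval_smul, smul_eq_mul, mul_assoc, RingHom.id_apply]
    exact integral_const_mul _ _

lemma gI_apply (p : Polynomial ℂ) :
    gI p = ∫ x : ℝ, p.eval (x : ℂ) * ((Real.exp (-x ^ 2) : ℝ) : ℂ) := rfl

lemma gI_pbar (p : Polynomial ℂ) : gI (pbar p) = (starRingEnd ℂ) (gI p) := by
  rw [gI_apply, gI_apply, ← integral_conj]
  congr 1; ext x
  rw [pbar_eval, map_mul, Complex.conj_ofReal]

open Polynomial in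
lemma gI_deriv (p : ℂ[X]) : gI (derivative p - 2 * X * p) = 0 := by
  rw [gI_apply]
  refine integral_eq_zero_of_hasDerivAt_of_integrable
    (f := fun x : ℝ => p.eval (x : ℂ) * ((Real.exp (-x ^ 2) : ℝ) : ℂ)) (fun x => ?_)
    (integrable_poly _) (integrable_poly _)
  have h1 : HasDerivAt (fun x : ℝ => p.eval (x : ℂ)) ((derivative p).eval (x : ℂ)) x :=
    (p.hasDerivAt (x : ℂ)).comp_ofReal
  have h2 : HasDerivAt (fun x : ℝ => Real.exp (-x ^ 2)) (Real.exp (-x ^ 2) * (-(2 * x))) x := by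
    have := ((hasDerivAt_pow 2 x).neg).exp
    simpa using this
  have h3 := h1.mul h2.ofReal_comp
  refine HasDerivAt.congr_deriv h3 ?_
  simp only [eval_sub, eval_mul, eval_X, eval_ofNat]
  push_cast
  ring

open Polynomial in
lemma gI_parts (r s : ℂ[X]) :
    gI ((derivative (derivative r) - 2 * X * derivative r) * s)
      = - gI (derivative r * derivative s) := by
  have h := gI_deriv (derivative r * s)
  have e : derivative (derivative r * s) - 2 * X * (derivative r * s)
    = (derivative (derivative r) - 2 * X * derivative r) * s + derivative r * derivative s := by
    rw [derivative_mul]; ring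
  rw [e, map_add] at h
  exact eq_neg_of_add_eq_zero_left h

/-- The matrix inner product of polynomial matrices. -/
noncomputable def gB {N : ℕ} (U V : Matrix (Fin N) (Fin N) (Polynomial ℂ)) :
    Matrix (Fin N) (Fin N) ℂ :=
  Matrix.of fun i j => ∑ k, gI (U i k * pbar (V j k))

lemma gB_apply {N : ℕ} (U V : Matrix (Fin N) (Fin N) (Polynomial ℂ)) (i j : Fin N) :
    gB U V i j = ∑ k, gI (U i k * pbar (V j k)) := rfl

lemma gB_add {N : ℕ} (U U' V : Matrix (Fin N) (Fin N) (Polynomial ℂ)) :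
    gB (U + U') V = gB U V + gB U' V := by
  ext i j
  simp [gB_apply, add_mul, Finset.sum_add_distrib]

lemma gB_const {N : ℕ} (c : Matrix (Fin N) (Fin N) ℂ)
    (U V : Matrix (Fin N) (Fin N) (Polynomial ℂ)) :
    gB (c.map Polynomial.C * U) V = c * gB U V := by
  ext i j
  simp only [gB_apply, Matrix.mul_apply, Matrix.map_apply, Finset.sum_mul, map_sum,
    Finset.mul_sum]
  rw [Finset.sum_comm]
  refine Finset.sum_congr rfl fun a _ => Finset.sum_congr rfl fun k _ => ?_
  rw [mul_assoc, Polynomial.C_mul', map_smul, smul_eq_mul]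

/-- Entrywise derivative. -/
noncomputable def dm {N : ℕ} (U : Matrix (Fin N) (Fin N) (Polynomial ℂ)) :
    Matrix (Fin N) (Fin N) (Polynomial ℂ) :=
  Matrix.of fun i j => Polynomial.derivative (U i j)

lemma dm_apply {N : ℕ} (U : Matrix (Fin N) (Fin N) (Polynomial ℂ)) (i j : Fin N) :
    dm U i j = Polynomial.derivative (U i j) := rfl

lemma dm_mul {N : ℕ} (U V : Matrix (Fin N) (Fin N) (Polynomial ℂ)) :
    dm (U * V) = dm U * V + U * dm V := by
  refine Matrix.ext fun i j => ?_
  simp [dm_apply, Matrix.mul_apply, Finset.sum_add_distrib]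

lemma dm_add {N : ℕ} (U V : Matrix (Fin N) (Fin N) (Polynomial ℂ)) :
    dm (U + V) = dm U + dm V := by
  refine Matrix.ext fun i j => ?_
  simp [dm_apply]

open Polynomial in
/-- `L` as a polynomial matrix. -/
noncomputable def LP (N : ℕ) (α : Fin N → ℝ) : Matrix (Fin N) (Fin N) ℂ[X] :=
  Matrix.of fun j k =>
    if (k : ℕ) ≤ (j : ℕ) then
      C (((α j / α k / Nat.factorial ((j : ℕ) - (k : ℕ)) : ℝ)) : ℂ) * hermP ((j : ℕ) - k)
    else 0

lemma LP_eval (N : ℕ) (α : Fin N → ℝ) (j k : Fin N) (x : ℝ) :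
    (LP N α j k).eval (x : ℂ) = Lmat N α x j k := by
  simp only [LP, Lmat, Matrix.of_apply]
  split_ifs
  · rw [Polynomial.eval_mul, Polynomial.eval_C, hermP_eval]
    push_cast; ring
  · simp

open Polynomial in
lemma LP_deriv (N : ℕ) (α : Fin N → ℝ) (hα : ∀ j, 0 < α j) :
    dm (LP N α) = (Amat N α).map C * LP N α := by
  refine Matrix.ext fun j k => ?_
  rw [Matrix.mul_apply, dm_apply]
  simp only [Matrix.map_apply, Amat, Matrix.of_apply]
  rcases Nat.eq_zero_or_pos (j : ℕ) with hj | hj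
  · rw [Finset.sum_eq_zero]
    · simp only [LP, Matrix.of_apply]
      split_ifs
      · simp [hj, hermP]
      · simp
    · intro a _
      rw [if_neg (by omega)]; simp
  · set j' : Fin N := ⟨(j : ℕ) - 1, by omega⟩ with hj'
    have hv : (j' : ℕ) = (j : ℕ) - 1 := rfl
    rw [Finset.sum_eq_single j']
    · rw [if_pos (by omega)]
      simp only [LP, Matrix.of_apply]
      by_cases h1 : (k : ℕ) ≤ (j : ℕ)
      · by_cases h2 : (k : ℕ) ≤ (j' : ℕ)
        · rw [if_pos h1, if_pos h2]
          obtain ⟨m, hm⟩ : ∃ m, (j : ℕ) = k + m + 1 := ⟨j - 1 - k, by omega⟩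
          have e1 : (j : ℕ) - k = m + 1 := by omega
          have e2 : (j' : ℕ) - k = m := by omega
          rw [e1, e2, derivative_C_mul, hermP_deriv, Nat.add_sub_cancel, ← mul_assoc, ← mul_assoc (C _) (C _)]
          congr 1
          have : (2 : ℂ[X]) * ((m + 1 : ℕ) : ℂ[X]) = C (2 * (m + 1 : ℂ)) := by
            have t : (C 2 : ℂ[X]) = 2 := rfl
            simp [t]
          rw [this, ← C_mul, ← C_mul]
          congr 1
          have a1 := (hα j).ne'
          have a2 := (hα j').ne'
          have a3 := (hα k).ne'
          have a4 : (m.factorial : ℝ) ≠ 0 := by positivity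
          have a5 : (m + 1 : ℝ) ≠ 0 := by positivity
          norm_cast
          rw [Nat.factorial_succ]
          push_cast
          field_simp
        · rw [if_pos h1, if_neg h2]
          have e1 : (j : ℕ) - k = 0 := by omega
          simp [e1, hermP]
      · rw [if_neg h1, if_neg (by omega)]
        simp
    · intro a _ ha
      rw [if_neg]
      · simp
      · intro h
        exact ha (Fin.ext (by omega))
    · simp

open Polynomial in
lemma LP_ode (N : ℕ) (α : Fin N → ℝ) :
    dm (dm (LP N α)) - (2 * X : ℂ[X]) • dm (LP N α)
      - (2 : ℂ[X]) • (LP N α * (Jmat N).map C) = - ((2 : ℂ[X]) • ((Jmat N).map C * LP N α)) := by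
  have hJ : (Jmat N).map (C : ℂ →+* ℂ[X]) = Matrix.diagonal fun j : Fin N => C ((j : ℕ) + 1 : ℂ) := by
    rw [Jmat, Matrix.diagonal_map (map_zero _)]
  rw [hJ]
  refine Matrix.ext fun j k => ?_
  simp only [Matrix.sub_apply, Matrix.neg_apply, Matrix.smul_apply, dm_apply,
    Matrix.mul_diagonal, Matrix.diagonal_mul, smul_eq_mul]
  simp only [LP, Matrix.of_apply]
  split_ifs with h
  · obtain ⟨m, hm⟩ : ∃ m, (j : ℕ) = k + m := ⟨j - k, by omega⟩
    have e1 : (j : ℕ) - k = m := by omega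
    rw [e1]
    have := hermP_ode m
    simp only [derivative_C_mul, hm]
    simp only [map_add, map_one, map_natCast, Nat.cast_add]
    linear_combination (C (((α j / α k / Nat.factorial m : ℝ)) : ℂ)) * this
  · simp

open Polynomial in
/-- The second order operator acting from the right. -/
noncomputable def opT {N : ℕ} (α : Fin N → ℝ) (U : Matrix (Fin N) (Fin N) ℂ[X]) :
    Matrix (Fin N) (Fin N) ℂ[X] :=
  dm (dm U) + (2 : ℂ[X]) • (dm U * (Amat N α).map C) - (2 * X : ℂ[X]) • dm U
    - (2 : ℂ[X]) • (U * (Jmat N).map C)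

open Polynomial in
lemma opT_mul {N : ℕ} (α : Fin N → ℝ) (hα : ∀ j, 0 < α j) (U : Matrix (Fin N) (Fin N) ℂ[X]) :
    opT α U * LP N α = dm (dm (U * LP N α)) - (2 * X : ℂ[X]) • dm (U * LP N α)
      - (2 : ℂ[X]) • (U * LP N α * (Jmat N).map C) := by
  have h1 := LP_deriv N α hα
  have h2 := congrArg (fun M => U * M) (LP_ode N α)
  simp only [mul_sub, mul_neg, Matrix.mul_smul] at h2
  simp only [opT, dm_mul, dm_add, add_mul, sub_mul, Matrix.smul_mul, Matrix.mul_assoc, ← h1]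
  have h3 : dm (dm U) * LP N α + (2 : ℂ[X]) • (dm U * dm (LP N α)) - (2 * X : ℂ[X]) • (dm U * LP N α)
      - (2 : ℂ[X]) • (U * ((Jmat N).map C * LP N α)) = dm (dm U) * LP N α + (2 : ℂ[X]) • (dm U * dm (LP N α)) - (2 * X : ℂ[X]) • (dm U * LP N α) + -
      ((2 : ℂ[X]) • (U * ((Jmat N).map C * LP N α))) := sub_eq_add_neg _ _
  rw [h3, ← h2]
  module

open Polynomial in
lemma gB_symm {N : ℕ} (R : Matrix (Fin N) (Fin N) ℂ[X]) :
    (gB (dm (dm R) - (2 * X : ℂ[X]) • dm R - (2 : ℂ[X]) • (R * (Jmat N).map C)) R).IsHermitian := by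
  have hJ : (Jmat N).map (C : ℂ →+* ℂ[X]) = Matrix.diagonal fun j : Fin N => C ((j : ℕ) + 1 : ℂ) := by
    rw [Jmat, Matrix.diagonal_map (map_zero _)]
  have key : ∀ i j, gB (dm (dm R) - (2 * X : ℂ[X]) • dm R - (2 : ℂ[X]) • (R * (Jmat N).map C)) R i j
      = ∑ k : Fin N, (- gI (derivative (R i k) * derivative (pbar (R j k)))
        - (2 * ((k : ℕ) + 1 : ℂ)) * gI (R i k * pbar (R j k))) := by
    intro i j
    rw [gB_apply]
    refine Finset.sum_congr rfl fun k _ => ?_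
    rw [hJ]
    simp only [Matrix.sub_apply, Matrix.smul_apply, dm_apply, Matrix.mul_diagonal, smul_eq_mul]
    rw [← gI_parts, ← smul_eq_mul (2 * ((k : ℕ) + 1 : ℂ)), ← map_smul, ← map_sub]
    congr 1
    rw [← C_mul', C_mul]
    have : (C 2 : ℂ[X]) = 2 := rfl
    rw [this]
    ring
  refine Matrix.IsHermitian.ext fun i j => ?_
  rw [key, key, ← starRingEnd_apply, map_sum]
  refine Finset.sum_congr rfl fun k _ => ?_
  rw [map_sub, map_neg, map_mul (starRingEnd ℂ), ← gI_pbar, ← gI_pbar]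
  simp only [map_mul, pbar_pbar, ← pbar_deriv]
  rw [mul_comm (pbar (derivative (R j k))), mul_comm (pbar (R j k))]
  have h2 : (starRingEnd ℂ) 2 = 2 := Complex.conj_ofNat 2
  simp [h2]

open Polynomial in
lemma matIP_eq {N : ℕ} (α : Fin N → ℝ) (F G : ℝ → Matrix (Fin N) (Fin N) ℂ)
    (U V : Matrix (Fin N) (Fin N) ℂ[X])
    (hU : ∀ x : ℝ, ∀ i j, F x i j = (U i j).eval (x : ℂ))
    (hV : ∀ x : ℝ, ∀ i j, G x i j = (V i j).eval (x : ℂ)) :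
    matIP N (hermW N α) F G = gB (U * LP N α) (V * LP N α) := by
  have e : ∀ (F : ℝ → Matrix (Fin N) (Fin N) ℂ) (U : Matrix (Fin N) (Fin N) ℂ[X])
    (_ : ∀ x : ℝ, ∀ i j, F x i j = (U i j).eval (x : ℂ)) (x : ℝ) (i j : Fin N),
      (F x * Lmat N α x) i j = ((U * LP N α) i j).eval (x : ℂ) := by
    intro F U hU x i j
    simp [Matrix.mul_apply, Polynomial.eval_finsetSum, hU, LP_eval]
  ext i j
  rw [gB_apply, ← map_sum, gI_apply]
  simp only [matIP, matInt, Matrix.of_apply]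
  congr 1; ext x
  have : F x * hermW N α x * (G x)ᴴ
      = Real.exp (-x ^ 2) • ((F x * Lmat N α x) * (G x * Lmat N α x)ᴴ) := by
    simp [hermW, Matrix.conjTranspose_mul, Matrix.mul_assoc]
  rw [this, Matrix.smul_apply, Matrix.mul_apply, Polynomial.eval_finsetSum, mul_comm,
    Complex.real_smul]
  congr 1
  refine Finset.sum_congr rfl fun k _ => ?_
  rw [Matrix.conjTranspose_apply, e F U hU, e G V hV, Polynomial.eval_mul, pbar_eval]
  rfl

open Polynomial in
lemma monic_poly {N n : ℕ} {F : ℝ → Matrix (Fin N) (Fin N) ℂ} (h : IsMonicMatPoly N n F) :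
    ∃ U : Matrix (Fin N) (Fin N) ℂ[X], (∀ x : ℝ, ∀ i j, F x i j = (U i j).eval (x : ℂ)) ∧
      (∀ i j, (U i j).coeff n = (1 : Matrix (Fin N) (Fin N) ℂ) i j) ∧
      (∀ i j k, n < k → (U i j).coeff k = 0) := by
  obtain ⟨c, hc, hF⟩ := h
  refine ⟨Matrix.of fun i j => ∑ k ∈ Finset.range (n + 1), C (c k i j) * X ^ k, ?_, ?_, ?_⟩
  · intro x i j
    rw [hF]
    simp only [Matrix.sum_apply, Polynomial.eval_finsetSum, Matrix.smul_apply, smul_eq_mul,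
      Matrix.of_apply, eval_mul, eval_C, eval_pow, eval_X]
    exact Finset.sum_congr rfl fun k _ => mul_comm _ _
  · intro i j
    simp [Polynomial.finsetSum_coeff, Polynomial.coeff_X_pow, hc]
  · intro i j k hk
    simp [Polynomial.finsetSum_coeff, Polynomial.coeff_X_pow]
    omega

open Polynomial in
lemma orth_lower {N : ℕ} (LL Y : Matrix (Fin N) (Fin N) ℂ[X])
    (U : ℕ → Matrix (Fin N) (Fin N) ℂ[X]) 
    (h1 : ∀ n i j, (U n i j).coeff n = (1 : Matrix (Fin N) (Fin N) ℂ) i j)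
    (h2 : ∀ n i j k, n < k → (U n i j).coeff k = 0) (n : ℕ)
    (h3 : ∀ m, m < n → gB (U m * LL) Y = 0) (d : ℕ) (hd : d ≤ n) :
    ∀ V : Matrix (Fin N) (Fin N) ℂ[X], (∀ i j k, d ≤ k → (V i j).coeff k = 0) →
      gB (V * LL) Y = 0 := by
  induction d with
  | zero =>
    intro V hV
    have : V = 0 := by
      refine Matrix.ext fun i j => ?_
      ext k
      simp [hV i j k (Nat.zero_le _)]
    subst this
    ext i j
    simp [gB_apply]
  | succ d ih =>
    intro V hV
    set c : Matrix (Fin N) (Fin N) ℂ := Matrix.of fun i j => (V i j).coeff d with hc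
    have hcU : ∀ i j k, ((c.map C * U d) i j).coeff k = ∑ a, c i a * (U d a j).coeff k := by
      intro i j k
      simp [Matrix.mul_apply, Polynomial.finsetSum_coeff]
    have h := ih (by omega) (V - c.map C * U d) (by
      intro i j k hk
      rw [Matrix.sub_apply, coeff_sub, hcU]
      rcases hk.eq_or_lt with rfl | hk
      · simp only [h1]
        rw [← Matrix.mul_apply, mul_one]
        simp [hc]
      · rw [hV i j k hk]
        simp [h2 d _ _ k hk])
    have e : V * LL = (V - c.map C * U d) * LL + c.map C * (U d * LL) := by
      rw [sub_mul, Matrix.mul_assoc]; abel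
    rw [e, gB_add, h, gB_const, h3 d (by omega)]
    simp

open Polynomial in
lemma opT_coeff {N : ℕ} (α : Fin N → ℝ) (U : Matrix (Fin N) (Fin N) ℂ[X]) (n : ℕ)
    (h1 : ∀ i j, (U i j).coeff n = (1 : Matrix (Fin N) (Fin N) ℂ) i j)
    (h2 : ∀ i j k, n < k → (U i j).coeff k = 0) (i j : Fin N) (k : ℕ) (hk : n ≤ k) :
    ((opT α U - ((Matrix.diagonal fun i : Fin N => (-2 * n - 2 * ((i : ℕ) + 1) : ℂ)).map C) * U)
      i j).coeff k = 0 := by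
  have hJ : (Jmat N).map (C : ℂ →+* ℂ[X]) = Matrix.diagonal fun j : Fin N => C ((j : ℕ) + 1 : ℂ) := by
    rw [Jmat, Matrix.diagonal_map (map_zero _)]
  rw [Matrix.diagonal_map (map_zero _), opT, hJ]
  have t : (2 : ℂ[X]) = C 2 := rfl
  have d1 : ∀ i j, (derivative (U i j)).coeff k = 0 := by
    intro i j
    rw [coeff_derivative, h2 i j (k + 1) (by omega), zero_mul]
  have d2 : (derivative (derivative (U i j))).coeff k = 0 := by
    rw [coeff_derivative, coeff_derivative, h2 i j (k + 1 + 1) (by omega)]; simp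
  have d3 : (X * derivative (U i j)).coeff k = k * (U i j).coeff k := by
    cases k with
    | zero => simp
    | succ k => rw [coeff_X_mul, coeff_derivative]; push_cast; ring
  simp only [Matrix.sub_apply, Matrix.add_apply, Matrix.smul_apply, smul_eq_mul,
    Matrix.mul_diagonal, Matrix.diagonal_mul, Matrix.mul_apply (M := dm U), dm_apply,
    Matrix.map_apply, Function.comp_apply]
  rw [t]
  simp only [mul_assoc, coeff_sub, coeff_add, coeff_C_mul, coeff_mul_C, finsetSum_coeff, d1, d2, d3]
  rcases hk.eq_or_lt with rfl | hk
  · rw [h1]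
    by_cases hij : i = j
    · subst hij; simp
    · simp [hij]
  · simp [h2 i j k hk]

/-- **Diagonality of the squared norms** (Lemma 5.5 of the paper): for the
Hermite-type weight `W(x) = e^{−x²}L(x)L(x)*`, the squared norms `ℋ(n)` of the
monic MVOPs and the recurrence coefficients `C(n) = ℋ(n)ℋ(n−1)⁻¹` are diagonal. -/
theorem hermite_norms_are_diagonal
    (N : ℕ) (hN : 1 ≤ N) (α : Fin N → ℝ) (hα : ∀ j, 0 < α j)
    (P : ℕ → ℝ → Matrix (Fin N) (Fin N) ℂ)
    (hPmonic : ∀ n, IsMonicMatPoly N n (P n))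
    (hPorth : ∀ n m, n ≠ m → matIP N (hermW N α) (P n) (P m) = 0)
    (hHpos : ∀ n, (matIP N (hermW N α) (P n) (P n)).PosDef)
    :
    (∀ n : ℕ, (matIP N (hermW N α) (P n) (P n)).IsDiag) ∧
    (∀ n : ℕ, 1 ≤ n →
      (matIP N (hermW N α) (P n) (P n) *
        (matIP N (hermW N α) (P (n - 1)) (P (n - 1)))⁻¹).IsDiag) := by
  have hd : ∀ n : ℕ, (matIP N (hermW N α) (P n) (P n)).IsDiag := by
    choose U hU h1 h2 using fun n => monic_poly (hPmonic n)
    intro n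
    have hH := (hHpos n).isHermitian
    have horth : ∀ m, m < n → gB (U m * LP N α) (U n * LP N α) = 0 := by
      intro m hm
      rw [← matIP_eq α (P m) (P n) (U m) (U n) (hU m) (hU n)]
      exact hPorth m n hm.ne
    rw [matIP_eq α (P n) (P n) (U n) (U n) (hU n) (hU n)] at hH ⊢
    set R := U n * LP N α with hR
    set Γ : Matrix (Fin N) (Fin N) ℂ :=
      Matrix.diagonal fun i : Fin N => (-2 * n - 2 * ((i : ℕ) + 1) : ℂ) with hΓ
    have hlow := orth_lower (LP N α) R U h1 h2 n horth n le_rfl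
      (opT α (U n) - Γ.map Polynomial.C * U n)
      (fun i j k hk => opT_coeff α (U n) n (h1 n) (h2 n) i j k hk)
    have hsym := gB_symm R
    rw [hR, ← opT_mul α hα, ← hR] at hsym
    have e : opT α (U n) * LP N α
        = (opT α (U n) - Γ.map Polynomial.C * U n) * LP N α + Γ.map Polynomial.C * R := by
      rw [sub_mul, hR, Matrix.mul_assoc]; abel
    rw [e, gB_add, hlow, gB_const, zero_add] at hsym
    intro i j hij
    have q1 := hsym.apply i j
    have q2 := hH.apply i j
    rw [hΓ, Matrix.diagonal_mul, Matrix.diagonal_mul, star_mul', q2] at q1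
    have q3 : (2 * ((i : ℕ) - (j : ℕ) : ℂ)) * gB R R i j = 0 := by
      simp at q1
      rcases q1 with q1 | q1
      · rw [q1]; ring
      · rw [q1, mul_zero]
    rcases mul_eq_zero.mp q3 with h | h
    · exfalso
      apply hij
      have h' : ((i : ℕ) : ℂ) = ((j : ℕ) : ℂ) := by
        linear_combination h / 2
      exact Fin.ext (by exact_mod_cast h')
    · exact h
  refine ⟨hd, fun n _ => ?_⟩
  have a := (hd n).diagonal_diag
  have b := (hd (n - 1)).diagonal_diag
  rw [← a, ← b, Matrix.inv_diagonal, Matrix.diagonal_mul_diagonal]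
  exact Matrix.isDiag_diagonal _
end

section
/- Let P(·,n) be the monic MVOPs of the Hermite-type weight W(x) = e^{−x²}L(x)L(x)*. Then for every n ≥ 0 and every x ∈ ℝ, −½ P''(x,n) + P'(x,n)(xI − A) + P(x,n) J = (nI + J) P(x,n), where J = diag(1,2,…,N); i.e. the MVOPs are eigenfunctions of the right-acting second order differential operator D = −½∂_x² + ∂_x(xI−A) + J with eigenvalue Γ(n) = nI + J. -/
open MeasureTheory Matrix Finset
open scoped ComplexOrder

open Polynomial in
theorem hso_integrable (p : ℂ[X]) :
    Integrable (fun x : ℝ => (Real.exp (-x ^ 2) : ℂ) * p.eval (x : ℂ)) := by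
  induction p using Polynomial.induction_on' with
  | add p q hp hq =>
    simp only [eval_add, mul_add]
    exact hp.add hq
  | monomial n a =>
    have h := integrable_rpow_mul_exp_neg_mul_sq (b := 1) one_pos (s := (n : ℝ))
      (by have : (0 : ℝ) ≤ n := Nat.cast_nonneg n
          linarith)
    have h2 := (h.ofReal (𝕜 := ℂ)).const_mul a
    refine h2.congr (Filter.Eventually.of_forall fun x => ?_)
    simp [eval_monomial, Real.rpow_natCast]
    ring

/-- Integration of a polynomial against the Gaussian weight. -/
noncomputable def hsoI : Polynomial ℂ →ₗ[ℂ] ℂ where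
  toFun p := ∫ x : ℝ, (Real.exp (-x ^ 2) : ℂ) * p.eval (x : ℂ)
  map_add' p q := by
    simp only [Polynomial.eval_add, mul_add]
    exact integral_add (hso_integrable p) (hso_integrable q)
  map_smul' a p := by
    simp only [Polynomial.eval_smul, smul_eq_mul, RingHom.id_apply]
    rw [← integral_const_mul]
    congr 1
    ext x
    ring

theorem hsoI_deriv (p : Polynomial ℂ) :
    hsoI (Polynomial.derivative p) = hsoI (2 * Polynomial.X * p) := by
  have key : ∀ x : ℝ, HasDerivAt (fun x : ℝ => (Real.exp (-x ^ 2) : ℂ) * p.eval (x : ℂ))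
      ((Real.exp (-x ^ 2) : ℂ) *
        (Polynomial.derivative p - 2 * Polynomial.X * p).eval (x : ℂ)) x := by
    intro x
    have h1 : HasDerivAt (fun x : ℝ => p.eval (x : ℂ))
        ((Polynomial.derivative p).eval (x : ℂ)) x := (p.hasDerivAt (x : ℂ)).comp_ofReal
    have h2 : HasDerivAt (fun x : ℝ => Real.exp (-x ^ 2)) (Real.exp (-x ^ 2) * (-(2 * x))) x := by
      have := ((hasDerivAt_pow 2 x).neg).exp
      simpa using this
    have h3 := h2.ofReal_comp.mul h1
    refine h3.congr_deriv ?_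
    simp
    ring
  have h := integral_eq_zero_of_hasDerivAt_of_integrable key (hso_integrable _) (hso_integrable p)
  have h' : hsoI (Polynomial.derivative p - 2 * Polynomial.X * p) = 0 := h
  rwa [map_sub, sub_eq_zero] at h'

/-- scalar operator -/
noncomputable def hsoT (q : Polynomial ℂ) : Polynomial ℂ :=
  Polynomial.X * Polynomial.derivative q -
    Polynomial.C (1 / 2) * Polynomial.derivative (Polynomial.derivative q)

theorem hsoT_symm (q r : Polynomial ℂ) : hsoI (hsoT q * r) = hsoI (q * hsoT r) := by
  have h := hsoI_deriv (Polynomial.C (1 / 2) *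
    (Polynomial.derivative q * r - q * Polynomial.derivative r))
  rw [← sub_eq_zero, ← map_sub] at h ⊢
  rw [← neg_eq_zero, ← map_neg] at h
  rw [← h]
  congr 1
  have h2 : (Polynomial.C (1 / 2) : Polynomial ℂ) * 2 = 1 := by
    rw [show (2 : Polynomial ℂ) = Polynomial.C 2 from rfl, ← Polynomial.C_mul]
    norm_num
  simp only [hsoT, Polynomial.derivative_mul, Polynomial.derivative_sub, Polynomial.derivative_C]
  linear_combination (-Polynomial.X *
    (Polynomial.derivative q * r - q * Polynomial.derivative r)) * h2

/-- normalized Hermite polynomials -/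
noncomputable def hsoh : ℕ → Polynomial ℂ
  | 0 => 1
  | 1 => 2 * Polynomial.X
  | (m + 2) => Polynomial.C ((m + 2 : ℂ)⁻¹) * (2 * Polynomial.X * hsoh (m + 1) - 2 * hsoh m)

theorem hsoh_rec (m : ℕ) : ((m : Polynomial ℂ) + 2) * hsoh (m + 2) =
    2 * Polynomial.X * hsoh (m + 1) - 2 * hsoh m := by
  have h2 : ((m : Polynomial ℂ) + 2) * (Polynomial.C ((m + 2 : ℂ)⁻¹)) = 1 := by
    rw [show ((m : Polynomial ℂ) + 2) = Polynomial.C (m + 2 : ℂ) by simp; rfl, ← Polynomial.C_mul,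
      mul_inv_cancel₀, Polynomial.C_1]
    exact_mod_cast (by omega : m + 2 ≠ 0)
  rw [hsoh, ← mul_assoc, h2, one_mul]

theorem hsoh_deriv (m : ℕ) : Polynomial.derivative (hsoh (m + 1)) = 2 * hsoh m := by
  induction m using Nat.strong_induction_on with
  | _ m ih =>
    match m with
    | 0 => simp [hsoh]
    | 1 =>
      have h0 := ih 0 (by omega)
      have hr := hsoh_rec 0
      have := congrArg Polynomial.derivative hr
      have h1 : (2 : Polynomial ℂ) ≠ 0 := two_ne_zero
      apply mul_left_cancel₀ h1
      have e0 : hsoh 0 = 1 := by simp [hsoh]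
      have e1 : hsoh 1 = 2 * Polynomial.X := by simp [hsoh]
      simp [e0, e1] at this
      rw [e1]
      linear_combination this
    | m + 2 =>
      have h0 := ih (m + 1) (by omega)
      have h1 := ih m (by omega)
      have hr := hsoh_rec (m + 1)
      have hr2 := hsoh_rec m
      have := congrArg Polynomial.derivative hr
      have h3 : ((m : Polynomial ℂ) + 3) ≠ 0 := by
        exact_mod_cast (by omega : m + 3 ≠ 0)
      apply mul_left_cancel₀ h3
      simp at this
      push_cast at *
      rw [show m + 1 + 2 = m + 2 + 1 from rfl, show m + 1 + 1 = m + 2 from rfl] at *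
      rw [h0, h1] at this
      linear_combination this - 2 * hr2

theorem hsoh_eval (m : ℕ) (x : ℝ) :
    (hsoh m).eval (x : ℂ) = ((hermiteF m x / Nat.factorial m : ℝ) : ℂ) := by
  induction m using Nat.strong_induction_on with
  | _ m ih =>
    match m with
    | 0 => simp [hsoh, hermiteF]
    | 1 => simp [hsoh, hermiteF]
    | m + 2 =>
      have h0 := ih (m + 1) (by omega)
      have h1 := ih m (by omega)
      have h2 : ((m : ℂ) + 2) ≠ 0 := by exact_mod_cast (by omega : m + 2 ≠ 0)
      have h3 : ((m : ℂ) + 1) ≠ 0 := by exact_mod_cast (by omega : m + 1 ≠ 0)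
      have h4 : ((Nat.factorial m : ℕ) : ℂ) ≠ 0 := by exact_mod_cast Nat.factorial_ne_zero m
      rw [hsoh, hermiteF]
      simp only [Polynomial.eval_mul, Polynomial.eval_sub, Polynomial.eval_C, Polynomial.eval_X,
        Polynomial.eval_ofNat, h0, h1]
      push_cast [Nat.factorial_succ]
      field_simp
      ring

/-- extended to integers -/
noncomputable def hsoz (m : ℤ) : Polynomial ℂ := if 0 ≤ m then hsoh m.toNat else 0

theorem hsoz_nat (m : ℕ) : hsoz m = hsoh m := by simp [hsoz]
theorem hsoz_neg {m : ℤ} (h : m < 0) : hsoz m = 0 := by simp [hsoz, h]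

theorem hsoz_deriv (m : ℤ) : Polynomial.derivative (hsoz m) = 2 * hsoz (m - 1) := by
  rcases lt_trichotomy m 0 with h | h | h
  · rw [hsoz_neg h, hsoz_neg (by omega)]; simp
  · subst h
    rw [hsoz_neg (m := 0 - 1) (by omega)]; simp [hsoz, hsoh]
  · obtain ⟨k, rfl⟩ : ∃ k : ℕ, m = ((k + 1 : ℕ) : ℤ) := ⟨(m - 1).toNat, by omega⟩
    rw [show ((k + 1 : ℕ) : ℤ) - 1 = (k : ℕ) by push_cast; ring, hsoz_nat, hsoz_nat, hsoh_deriv]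

theorem hsoz_rec (m : ℤ) : (m : Polynomial ℂ) * hsoz m =
    2 * Polynomial.X * hsoz (m - 1) - 2 * hsoz (m - 2) := by
  rcases lt_or_ge m 0 with h | h
  · rw [hsoz_neg h, hsoz_neg (by omega), hsoz_neg (by omega)]; simp
  · obtain ⟨k, rfl⟩ : ∃ k : ℕ, m = (k : ℤ) := ⟨m.toNat, by omega⟩
    match k with
    | 0 => rw [hsoz_neg (m := ((0 : ℕ) : ℤ) - 1) (by simp), hsoz_neg (m := ((0 : ℕ) : ℤ) - 2) (by simp)]; simp
    | 1 => rw [hsoz_neg (m := ((1 : ℕ) : ℤ) - 2) (by simp)]; simp [hsoz, hsoh]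
    | k + 2 =>
      rw [show ((k + 2 : ℕ) : ℤ) - 1 = (k + 1 : ℕ) by push_cast; ring,
        show ((k + 2 : ℕ) : ℤ) - 2 = (k : ℕ) by push_cast; ring, hsoz_nat, hsoz_nat, hsoz_nat,
        ← hsoh_rec]
      push_cast
      ring

section hso
open Polynomial

variable {N : ℕ}

/-- derivative of polynomial matrix -/
noncomputable def hsoD (F : Matrix (Fin N) (Fin N) ℂ[X]) : Matrix (Fin N) (Fin N) ℂ[X] :=
  F.map derivative

theorem hsoD_mul (F G : Matrix (Fin N) (Fin N) ℂ[X]) :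
    hsoD (F * G) = hsoD F * G + F * hsoD G := by
  ext1 i j
  simp [hsoD, Matrix.mul_apply, derivative_sum, derivative_mul, Finset.sum_add_distrib]

theorem hsoD_add (F G : Matrix (Fin N) (Fin N) ℂ[X]) :
    hsoD (F + G) = hsoD F + hsoD G := by
  ext1 i j
  simp [hsoD]

/-- constants -/
noncomputable def hsoC (A : Matrix (Fin N) (Fin N) ℂ) : Matrix (Fin N) (Fin N) ℂ[X] :=
  A.map C

/-- coefficient matrices -/
noncomputable def hsoco (k : ℕ) (F : Matrix (Fin N) (Fin N) ℂ[X]) : Matrix (Fin N) (Fin N) ℂ :=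
  F.map (fun p => p.coeff k)

theorem hsoco_add (k : ℕ) (F G : Matrix (Fin N) (Fin N) ℂ[X]) :
    hsoco k (F + G) = hsoco k F + hsoco k G := by ext; simp [hsoco]
theorem hsoco_sub (k : ℕ) (F G : Matrix (Fin N) (Fin N) ℂ[X]) :
    hsoco k (F - G) = hsoco k F - hsoco k G := by ext; simp [hsoco]
theorem hsoco_Csmul (k : ℕ) (a : ℂ) (F : Matrix (Fin N) (Fin N) ℂ[X]) :
    hsoco k ((C a : ℂ[X]) • F) = a • hsoco k F := by ext; simp [hsoco]
theorem hsoco_mulC (k : ℕ) (F : Matrix (Fin N) (Fin N) ℂ[X]) (A : Matrix (Fin N) (Fin N) ℂ) :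
    hsoco k (F * hsoC A) = hsoco k F * A := by
  ext; simp [hsoco, hsoC, Matrix.mul_apply]
theorem hsoco_Cmul (k : ℕ) (F : Matrix (Fin N) (Fin N) ℂ[X]) (A : Matrix (Fin N) (Fin N) ℂ) :
    hsoco k (hsoC A * F) = A * hsoco k F := by
  ext; simp [hsoco, hsoC, Matrix.mul_apply]
theorem hsoco_D (k : ℕ) (F : Matrix (Fin N) (Fin N) ℂ[X]) :
    hsoco k (hsoD F) = ((k : ℂ) + 1) • hsoco (k + 1) F := by
  ext; simp [hsoco, hsoD, coeff_derivative, mul_comm]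
theorem hsoco_XD (k : ℕ) (F : Matrix (Fin N) (Fin N) ℂ[X]) :
    hsoco k ((X : ℂ[X]) • hsoD F) = (k : ℂ) • hsoco k F := by
  ext i j
  cases k with
  | zero => simp [hsoco]
  | succ k => simp [hsoco, hsoD, coeff_X_mul, coeff_derivative, mul_comm]

theorem hso_zero (F : Matrix (Fin N) (Fin N) ℂ[X]) (h : ∀ k, hsoco k F = 0) : F = 0 := by
  ext i j k
  have := congrFun (congrFun (h k) i) j
  simpa [hsoco] using this

theorem hso_expand (f : Matrix (Fin N) (Fin N) ℂ[X] → Matrix (Fin N) (Fin N) ℂ)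
    (hf0 : f 0 = 0)
    (hadd : ∀ F G, f (F + G) = f F + f G)
    (hC : ∀ A F, f F = 0 → f (hsoC A * F) = 0)
    (Q : ℕ → Matrix (Fin N) (Fin N) ℂ[X]) (hQ1 : ∀ k, hsoco k (Q k) = 1)
    (hQ2 : ∀ k m, k < m → hsoco m (Q k) = 0) (n : ℕ) (hfQ : ∀ k < n, f (Q k) = 0) :
    ∀ G, (∀ k, n ≤ k → hsoco k G = 0) → f G = 0 := by
  induction n with
  | zero =>
    intro G hG
    rw [hso_zero G (fun k => hG k (Nat.zero_le k)), hf0]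
  | succ n ih =>
    intro G hG
    have h1 := ih (fun k hk => hfQ k (by omega)) (G - hsoC (hsoco n G) * Q n) ?_
    · have h2 := hadd (G - hsoC (hsoco n G) * Q n) (hsoC (hsoco n G) * Q n)
      rw [sub_add_cancel, h1, hC _ _ (hfQ n (by omega)), add_zero] at h2
      exact h2
    · intro k hk
      rw [hsoco_sub, hsoco_Cmul]
      rcases hk.eq_or_lt with rfl | hk
      · rw [hQ1, mul_one, sub_self]
      · rw [hQ2 n k hk, hG k hk, mul_zero, sub_zero]

/-- matrix of Gaussian integrals -/
noncomputable def hsoMI (F : Matrix (Fin N) (Fin N) ℂ[X]) : Matrix (Fin N) (Fin N) ℂ :=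
  F.map hsoI

theorem hsoMI_add (F G : Matrix (Fin N) (Fin N) ℂ[X]) : hsoMI (F + G) = hsoMI F + hsoMI G := by
  ext; simp [hsoMI]

theorem hsoMI_Cmul (A : Matrix (Fin N) (Fin N) ℂ) (F : Matrix (Fin N) (Fin N) ℂ[X]) :
    hsoMI (hsoC A * F) = A * hsoMI F := by
  ext; simp [hsoMI, hsoC, Matrix.mul_apply, ← smul_eq_C_mul]

theorem hsoMI_mulC (A : Matrix (Fin N) (Fin N) ℂ) (F : Matrix (Fin N) (Fin N) ℂ[X]) :
    hsoMI (F * hsoC A) = hsoMI F * A := by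
  ext i j
  simp only [hsoMI, hsoC, Matrix.mul_apply, Matrix.map_apply, map_sum]
  refine Finset.sum_congr rfl fun l _ => ?_
  rw [mul_comm, ← smul_eq_C_mul, map_smul, smul_eq_mul, mul_comm]

/-- matrix version of T -/
noncomputable def hsoMT (F : Matrix (Fin N) (Fin N) ℂ[X]) : Matrix (Fin N) (Fin N) ℂ[X] :=
  (X : ℂ[X]) • hsoD F - (C (1 / 2) : ℂ[X]) • hsoD (hsoD F)

theorem hsoMT_symm (Q R : Matrix (Fin N) (Fin N) ℂ[X]) :
    hsoMI (hsoMT Q * Rᵀ) = hsoMI (Q * (hsoMT R)ᵀ) := by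
  have h : ∀ (F : Matrix (Fin N) (Fin N) ℂ[X]) i j, hsoMT F i j = hsoT (F i j) := by
    intro F i j
    simp [hsoMT, hsoT, hsoD]
  ext i j
  simp only [hsoMI, Matrix.map_apply, Matrix.mul_apply, Matrix.transpose_apply, map_sum, h,
    hsoT_symm]

/-- polynomial version of L -/
noncomputable def hsoL (α : Fin N → ℝ) : Matrix (Fin N) (Fin N) ℂ[X] :=
  Matrix.of fun j k => C (((α j / α k : ℝ)) : ℂ) * hsoz ((j : ℤ) - (k : ℤ))

theorem hsoL_deriv (α : Fin N → ℝ) (hα : ∀ j, 0 < α j) :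
    hsoD (hsoL α) = hsoC (Amat N α) * hsoL α := by
  ext1 j k
  rw [Matrix.mul_apply]
  simp only [hsoD, hsoL, hsoC, Amat, Matrix.map_apply, Matrix.of_apply, derivative_mul,
    derivative_C, zero_mul, zero_add, hsoz_deriv]
  by_cases hj : (j : ℕ) = 0
  · rw [hsoz_neg (by omega), Finset.sum_eq_zero]
    · simp
    · intro l _
      rw [if_neg (by omega)]
      simp
  · have hl : (j : ℕ) - 1 < N := by omega
    rw [Finset.sum_eq_single (⟨(j : ℕ) - 1, hl⟩ : Fin N)]
    · rw [if_pos (by simp; omega)]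
      have e : ((((⟨(j : ℕ) - 1, hl⟩ : Fin N) : ℕ) : ℤ) - (k : ℤ)) = (j : ℤ) - (k : ℤ) - 1 := by
        simp; omega
      rw [e, ← mul_assoc, ← mul_assoc, ← C_mul, ← Complex.ofReal_mul,
        show (2 : ℂ[X]) = C 2 from rfl, ← C_mul]
      congr 2
      have h1 := (hα ⟨(j : ℕ) - 1, hl⟩).ne'
      have h2 := (hα k).ne'
      rw [show (2 : ℂ) = ((2 : ℝ) : ℂ) by simp, ← Complex.ofReal_mul]
      congr 1
      field_simp
    · intro l _ hne
      rw [if_neg]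
      · simp
      · intro h
        exact hne (Fin.ext (by simp; omega))
    · simp

theorem hsoL_J (α : Fin N → ℝ) :
    hsoC (Jmat N) * hsoL α - (X : ℂ[X]) • hsoD (hsoL α) +
      (C (1 / 2) : ℂ[X]) • hsoD (hsoD (hsoL α)) = hsoL α * hsoC (Jmat N) := by
  have e : hsoC (Jmat N) = Matrix.diagonal fun j : Fin N => ((j : ℕ) : ℂ[X]) + 1 := by
    ext1 i j
    by_cases h : i = j
    · subst h; simp [hsoC, Jmat]
    · simp [hsoC, Jmat, h]
  rw [e]
  ext1 j k
  have h2 : (C (1 / 2) : ℂ[X]) * 2 = 1 := by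
    rw [show (2 : ℂ[X]) = C 2 from rfl, ← C_mul]
    norm_num
  simp only [Matrix.add_apply, Matrix.sub_apply, Matrix.smul_apply, Matrix.diagonal_mul,
    Matrix.mul_diagonal, hsoD, hsoL, Matrix.map_apply, Matrix.of_apply, derivative_mul,
    derivative_C, zero_mul, zero_add, hsoz_deriv, derivative_ofNat, smul_eq_mul]
  have hr := hsoz_rec ((j : ℤ) - (k : ℤ))
  push_cast at hr
  rw [show (j : ℤ) - (k : ℤ) - 1 - 1 = (j : ℤ) - (k : ℤ) - 2 by ring]
  linear_combination C (((α j / α k : ℝ)) : ℂ) * hr +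
    2 * C (((α j / α k : ℝ)) : ℂ) * hsoz ((j : ℤ) - (k : ℤ) - 2) * h2

/-- the operator -/
noncomputable def hsoOp (α : Fin N → ℝ) (F : Matrix (Fin N) (Fin N) ℂ[X]) :
    Matrix (Fin N) (Fin N) ℂ[X] :=
  (X : ℂ[X]) • hsoD F - (C (1 / 2) : ℂ[X]) • hsoD (hsoD F) - hsoD F * hsoC (Amat N α)
    + F * hsoC (Jmat N)

theorem hsoOp_L (α : Fin N → ℝ) (hα : ∀ j, 0 < α j) (F : Matrix (Fin N) (Fin N) ℂ[X]) :
    hsoOp α F * hsoL α = hsoMT (F * hsoL α) + F * hsoL α * hsoC (Jmat N) := by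
  have h2 : (C (1 / 2) : ℂ[X]) + C (1 / 2) = 1 := by
    rw [← C_add]; norm_num
  have h3 : ∀ M : Matrix (Fin N) (Fin N) ℂ[X],
      (C (1 / 2) : ℂ[X]) • M + (C (1 / 2) : ℂ[X]) • M = M := by
    intro M; rw [← add_smul, h2, one_smul]
  rw [mul_assoc F, ← hsoL_J]
  simp only [hsoOp, hsoMT, hsoD_mul, hsoD_add, add_mul, sub_mul, mul_add, mul_sub, smul_mul_assoc,
    mul_smul_comm, smul_add, mul_assoc, ← hsoL_deriv α hα]
  have h4 := h3 (hsoD F * hsoD (hsoL α))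
  set Z := (C (1 / 2) : ℂ[X]) • (hsoD F * hsoD (hsoL α)) with hZ
  rw [← h4]
  abel

/-- the bilinear form -/
noncomputable def hsoB (α : Fin N → ℝ) (F G : Matrix (Fin N) (Fin N) ℂ[X]) :
    Matrix (Fin N) (Fin N) ℂ := hsoMI ((F * hsoL α) * (G * hsoL α)ᵀ)

theorem hsoB_symm (α : Fin N → ℝ) (hα : ∀ j, 0 < α j) (F G : Matrix (Fin N) (Fin N) ℂ[X]) :
    hsoB α (hsoOp α F) G = hsoB α F (hsoOp α G) := by
  rw [hsoB, hsoB, hsoOp_L α hα, hsoOp_L α hα, Matrix.transpose_add, add_mul, mul_add, hsoMI_add,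
    hsoMI_add, hsoMT_symm, Matrix.transpose_mul _ (hsoC _)]
  have : (hsoC (Jmat N))ᵀ = hsoC (Jmat N) := by
    rw [hsoC, ← Matrix.transpose_map, Jmat, Matrix.diagonal_transpose]
  rw [this, mul_assoc (F * hsoL α)]

theorem hsoB_add_left (α : Fin N → ℝ) (F F' G : Matrix (Fin N) (Fin N) ℂ[X]) :
    hsoB α (F + F') G = hsoB α F G + hsoB α F' G := by
  simp only [hsoB, add_mul, hsoMI_add]
theorem hsoB_add_right (α : Fin N → ℝ) (F G G' : Matrix (Fin N) (Fin N) ℂ[X]) :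
    hsoB α F (G + G') = hsoB α F G + hsoB α F G' := by
  simp only [hsoB, add_mul, Matrix.transpose_add, mul_add, hsoMI_add]
theorem hsoB_C_left (α : Fin N → ℝ) (A) (F G : Matrix (Fin N) (Fin N) ℂ[X]) :
    hsoB α (hsoC A * F) G = A * hsoB α F G := by
  simp only [hsoB, mul_assoc, hsoMI_Cmul]
theorem hsoB_C_right (α : Fin N → ℝ) (A) (F G : Matrix (Fin N) (Fin N) ℂ[X]) :
    hsoB α F (hsoC A * G) = hsoB α F G * Aᵀ := by
  have : (hsoC A)ᵀ = hsoC Aᵀ := by rw [hsoC, hsoC, Matrix.transpose_map]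
  simp only [hsoB]
  rw [mul_assoc (hsoC A), Matrix.transpose_mul (hsoC A), this, ← mul_assoc, hsoMI_mulC]
theorem hsoB_zero_left (α : Fin N → ℝ) (G : Matrix (Fin N) (Fin N) ℂ[X]) :
    hsoB α 0 G = 0 := by
  have := hsoB_add_left α 0 0 G
  simpa using this
theorem hsoB_zero_right (α : Fin N → ℝ) (G : Matrix (Fin N) (Fin N) ℂ[X]) :
    hsoB α G 0 = 0 := by
  have := hsoB_add_right α G 0 0
  simpa using this

theorem hsoco_Op (α : Fin N → ℝ) (k : ℕ) (F : Matrix (Fin N) (Fin N) ℂ[X]) :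
    hsoco k (hsoOp α F) = (k : ℂ) • hsoco k F
      - (1 / 2 : ℂ) • (((k : ℂ) + 1) • (((k + 1 : ℕ) : ℂ) + 1) • hsoco (k + 1 + 1) F)
      - ((k : ℂ) + 1) • hsoco (k + 1) F * Amat N α + hsoco k F * Jmat N := by
  simp only [hsoOp, hsoco_add, hsoco_sub, hsoco_XD, hsoco_Csmul, hsoco_mulC, hsoco_D]

/-- algebraic core -/
theorem hso_core (α : Fin N → ℝ) (hα : ∀ j, 0 < α j)
    (P Q : ℕ → Matrix (Fin N) (Fin N) ℂ[X])
    (hP1 : ∀ k, hsoco k (P k) = 1) (hP2 : ∀ k m, k < m → hsoco m (P k) = 0)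
    (hQ1 : ∀ k, hsoco k (Q k) = 1) (hQ2 : ∀ k m, k < m → hsoco m (Q k) = 0)
    (horth : ∀ n m, n ≠ m → hsoB α (P n) (Q m) = 0)
    (hunit : ∀ n, IsUnit (hsoB α (P n) (Q n))) (n : ℕ) :
    hsoOp α (P n) = hsoC ((n : ℂ) • (1 : Matrix (Fin N) (Fin N) ℂ) + Jmat N) * P n := by
  have hL : ∀ d F, (∀ k, d ≤ k → hsoco k F = 0) → hsoB α F (Q d) = 0 := by
    intro d
    refine hso_expand (fun F => hsoB α F (Q d)) (hsoB_zero_left _ _)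
      (fun F G => hsoB_add_left _ _ _ _) (fun A F h => ?_) P hP1 hP2 d
      (fun k hk => horth k d hk.ne)
    change hsoB α _ _ = 0
    rw [hsoB_C_left]
    rw [show hsoB α F (Q d) = 0 from h, mul_zero]
  have hR : ∀ d F, (∀ k, d ≤ k → hsoco k F = 0) → hsoB α (P d) F = 0 := by
    intro d
    refine hso_expand (fun F => hsoB α (P d) F) (hsoB_zero_right _ _)
      (fun F G => hsoB_add_right _ _ _ _) (fun A F h => ?_) Q hQ1 hQ2 d
      (fun k hk => horth d k hk.ne')
    change hsoB α _ _ = 0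
    rw [hsoB_C_right]
    rw [show hsoB α (P d) F = 0 from h, zero_mul]
  set Γ := (n : ℂ) • (1 : Matrix (Fin N) (Fin N) ℂ) + Jmat N with hΓ
  set E := hsoOp α (P n) - hsoC Γ * P n with hE
  have hEdeg : ∀ k, n ≤ k → hsoco k E = 0 := by
    intro k hk
    rw [hE, hsoco_sub, hsoco_Op, hsoco_Cmul, hP2 n (k + 1) (by omega),
      hP2 n (k + 1 + 1) (by omega)]
    rcases hk.eq_or_lt with rfl | hk
    · rw [hP1]; simp [hΓ]
    · rw [hP2 n k hk]; simp
  have hEorth : ∀ m < n, hsoB α E (Q m) = 0 := by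
    intro m hm
    have h1 : hsoB α (E + hsoC Γ * P n) (Q m) = 0 := by
      rw [hE, sub_add_cancel, hsoB_symm α hα]
      apply hR
      intro k hk
      rw [hsoco_Op, hQ2 m k (by omega), hQ2 m (k + 1) (by omega), hQ2 m (k + 1 + 1) (by omega)]
      simp
    rw [hsoB_add_left, hsoB_C_left, horth n m hm.ne', mul_zero, add_zero] at h1
    exact h1
  have key : ∀ d, d ≤ n → (∀ k, d ≤ k → hsoco k E = 0) → E = 0 := by
    intro d
    induction d with
    | zero => intro _ h; exact hso_zero E (fun k => h k (Nat.zero_le k))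
    | succ d ih =>
      intro hd h
      apply ih (by omega)
      have h1 := hL d (E - hsoC (hsoco d E) * P d) (by
        intro k hk
        rw [hsoco_sub, hsoco_Cmul]
        rcases hk.eq_or_lt with rfl | hk
        · rw [hP1, mul_one, sub_self]
        · rw [hP2 d k hk, h k hk, mul_zero, sub_zero])
      have h2 := hsoB_add_left α (E - hsoC (hsoco d E) * P d) (hsoC (hsoco d E) * P d) (Q d)
      rw [sub_add_cancel, h1, hEorth d (by omega), hsoB_C_left, zero_add] at h2
      have h3 : hsoco d E = 0 := (hunit d).mul_left_eq_zero.mp h2.symm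
      intro k hk
      rcases hk.eq_or_lt with rfl | hk
      · exact h3
      · exact h k hk
  exact sub_eq_zero.mp (key n le_rfl hEdeg)

/-- evaluation -/
noncomputable def hsoev (x : ℝ) : Matrix (Fin N) (Fin N) ℂ[X] →+* Matrix (Fin N) (Fin N) ℂ :=
  (evalRingHom (x : ℂ)).mapMatrix

theorem hsoev_apply (x : ℝ) (F : Matrix (Fin N) (Fin N) ℂ[X]) (i j) :
    hsoev x F i j = (F i j).eval (x : ℂ) := rfl

theorem hsoev_D (F : Matrix (Fin N) (Fin N) ℂ[X]) (f : ℝ → Matrix (Fin N) (Fin N) ℂ)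
    (h : ∀ x, f x = hsoev x F) (x : ℝ) : matDeriv N f x = hsoev x (hsoD F) := by
  ext i j
  simp only [matDeriv, Matrix.of_apply, h, hsoev_apply, hsoD, Matrix.map_apply]
  exact ((F i j).hasDerivAt (x : ℂ)).comp_ofReal.deriv

theorem hsoev_C (x : ℝ) (A : Matrix (Fin N) (Fin N) ℂ) : hsoev x (hsoC A) = A := by
  ext i j; simp [hsoev_apply, hsoC]

theorem hsoev_smul (x : ℝ) (p : ℂ[X]) (F : Matrix (Fin N) (Fin N) ℂ[X]) :
    hsoev x (p • F) = p.eval (x : ℂ) • hsoev x F := by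
  ext i j; simp [hsoev_apply]

theorem hsoev_L (α : Fin N → ℝ) (x : ℝ) : Lmat N α x = hsoev x (hsoL α) := by
  ext j k
  simp only [Lmat, hsoev_apply, hsoL, Matrix.of_apply, eval_mul, eval_C]
  split_ifs with h
  · rw [show (j : ℤ) - (k : ℤ) = (((j : ℕ) - (k : ℕ) : ℕ) : ℤ) by omega, hsoz_nat, hsoh_eval]
    push_cast
    ring
  · rw [hsoz_neg (by omega)]; simp

theorem hsoev_L_star (α : Fin N → ℝ) (x : ℝ) :
    (Lmat N α x)ᴴ = hsoev x (hsoL α)ᵀ := by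
  have h : (Lmat N α x)ᴴ = (Lmat N α x)ᵀ := by
    ext j k
    simp only [Lmat, Matrix.conjTranspose_apply, Matrix.transpose_apply, Matrix.of_apply]
    split_ifs
    · exact Complex.conj_ofReal _
    · simp
  rw [h, hsoev_L]
  rfl

/-- conjugate polynomial matrix -/
noncomputable def hsoconj (F : Matrix (Fin N) (Fin N) ℂ[X]) : Matrix (Fin N) (Fin N) ℂ[X] :=
  F.map (Polynomial.map (starRingEnd ℂ))

theorem hsoev_conj (x : ℝ) (F : Matrix (Fin N) (Fin N) ℂ[X]) :
    (hsoev x F)ᴴ = hsoev x (hsoconj F)ᵀ := by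
  ext i j
  simp only [Matrix.conjTranspose_apply, hsoev_apply, Matrix.transpose_apply, hsoconj,
    Matrix.map_apply]
  have := Polynomial.eval_map_apply (p := F j i) (f := starRingEnd ℂ) (x : ℂ)
  rw [Complex.conj_ofReal] at this
  exact this.symm

theorem hsoIP (α : Fin N → ℝ) (F G : Matrix (Fin N) (Fin N) ℂ[X])
    (f g : ℝ → Matrix (Fin N) (Fin N) ℂ)
    (hf : ∀ x, f x = hsoev x F) (hg : ∀ x, g x = hsoev x G) :
    matIP N (hermW N α) f g = hsoB α F (hsoconj G) := by
  ext i j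
  simp only [matIP, matInt, Matrix.of_apply, hsoB, hsoMI, Matrix.map_apply]
  change _ = ∫ x : ℝ, _
  congr 1
  ext x
  rw [← hsoev_apply]
  rw [hf, hg, hsoev_conj, hermW, hsoev_L_star, hsoev_L, Matrix.mul_smul, Matrix.smul_mul,
    ← map_mul, ← map_mul, ← map_mul, Matrix.smul_apply, Matrix.transpose_mul]
  simp only [mul_assoc, Complex.real_smul]

end hso

/-- **Second order differential operator for Hermite-type MVOPs**
(Proposition 5.6 of the paper): the monic MVOPs for `W(x) = e^{−x²}L(x)L(x)*`
satisfy `−½P'' + P'(xI−A) + P·J = (nI+J)P`. -/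
theorem hermite_second_order_operator
    (N : ℕ) (hN : 1 ≤ N) (α : Fin N → ℝ) (hα : ∀ j, 0 < α j)
    (P : ℕ → ℝ → Matrix (Fin N) (Fin N) ℂ)
    (hPmonic : ∀ n, IsMonicMatPoly N n (P n))
    (hPorth : ∀ n m, n ≠ m → matIP N (hermW N α) (P n) (P m) = 0)
    (hHpos : ∀ n, (matIP N (hermW N α) (P n) (P n)).PosDef)
    :
    ∀ (n : ℕ) (x : ℝ),
      -(1 / 2 : ℂ) • matDeriv N (matDeriv N (P n)) x +
          matDeriv N (P n) x * ((x : ℂ) • (1 : Matrix (Fin N) (Fin N) ℂ) - Amat N α) +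
          P n x * Jmat N =
        ((n : ℂ) • (1 : Matrix (Fin N) (Fin N) ℂ) + Jmat N) * P n x := by
  choose c hc1 hc2 using hPmonic
  let Q : ℕ → Matrix (Fin N) (Fin N) (Polynomial ℂ) := fun n =>
    Matrix.of fun i j => ∑ k ∈ Finset.range (n + 1), Polynomial.monomial k (c n k i j)
  have hPQ : ∀ n x, P n x = hsoev x (Q n) := by
    intro n x
    ext i j
    rw [hc2, hsoev_apply]
    simp [Q, Matrix.sum_apply, Polynomial.eval_finsetSum, Polynomial.eval_monomial, mul_comm]
  have hco : ∀ n k, hsoco k (Q n) = if k ≤ n then c n k else 0 := by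
    intro n k
    ext i j
    simp only [hsoco, Q, Matrix.map_apply, Matrix.of_apply, Polynomial.finsetSum_coeff,
      Polynomial.coeff_monomial, Finset.sum_ite_eq', Finset.mem_range, Nat.lt_succ_iff]
    split_ifs <;> simp
  have hcc : ∀ n k, hsoco k (hsoconj (Q n)) = (hsoco k (Q n)).map (starRingEnd ℂ) := by
    intro n k
    ext i j
    simp [hsoco, hsoconj, Polynomial.coeff_map]
  have hQ1 : ∀ k, hsoco k (Q k) = 1 := fun k => by rw [hco, if_pos le_rfl, hc1]
  have hQ2 : ∀ k m, k < m → hsoco m (Q k) = 0 := fun k m h => by rw [hco, if_neg (by omega)]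
  have hIP : ∀ n m, matIP N (hermW N α) (P n) (P m) = hsoB α (Q n) (hsoconj (Q m)) :=
    fun n m => hsoIP α _ _ _ _ (hPQ n) (hPQ m)
  intro n x
  have core := hso_core α hα Q (fun k => hsoconj (Q k)) hQ1 hQ2
    (fun k => by rw [hcc, hQ1]; exact Matrix.map_one _ (map_zero _) (map_one _))
    (fun k m h => by rw [hcc, hQ2 k m h]; exact Matrix.map_zero _ (map_zero _))
    (fun n m h => by rw [← hIP]; exact hPorth n m h)
    (fun n => by rw [← hIP]; exact (hHpos n).isUnit) n
  have h1 := congrArg (hsoev x) core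
  rw [hsoOp, map_add, map_sub, map_sub, map_mul, map_mul, map_mul, hsoev_smul, hsoev_smul,
    hsoev_C, hsoev_C, hsoev_C, ← hPQ, Polynomial.eval_X, Polynomial.eval_C] at h1
  rw [hsoev_D _ _ (hsoev_D _ _ (hPQ n)), hsoev_D _ _ (hPQ n), ← h1, mul_sub, Matrix.mul_smul,
    mul_one, neg_smul]
  abel
end

section
/- Let P(·,n) be the monic MVOPs of the Hermite-type weight W(x) = e^{−x²}L(x)L(x)*, with recurrence coefficients B(n), C(n). Then for every n ≥ 1 and every x ∈ ℝ, P(x,n)(J − xA + ½A²) = −A P(x,n+1) + (nI + J − 2C(n) − A B(n) + ½A²) P(x,n) + (C(n)A − 2C(n)B(n−1)) P(x,n−1); i.e. the Casimir operator of the harmonic oscillator algebra corresponds under the generalized Fourier map to this second order difference operator acting on the degree variable. -/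
open MeasureTheory Matrix Finset
open scoped ComplexOrder

/-! ### Polynomial functions -/

/-- Polynomial functions on the real line with complex coefficients. -/
def PolyFn (f : ℝ → ℂ) : Prop := ∃ p : Polynomial ℂ, ∀ x : ℝ, f x = p.eval (x : ℂ)

lemma PolyFn.const (c : ℂ) : PolyFn (fun _ => c) := ⟨Polynomial.C c, fun x => by simp⟩

lemma PolyFn.id : PolyFn (fun x => (x : ℂ)) := ⟨Polynomial.X, fun x => by simp⟩

lemma PolyFn.add {f g : ℝ → ℂ} (hf : PolyFn f) (hg : PolyFn g) : PolyFn (fun x => f x + g x) := by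
  obtain ⟨p, hp⟩ := hf
  obtain ⟨q, hq⟩ := hg
  exact ⟨p + q, fun x => by simp [hp, hq]⟩

lemma PolyFn.mul {f g : ℝ → ℂ} (hf : PolyFn f) (hg : PolyFn g) : PolyFn (fun x => f x * g x) := by
  obtain ⟨p, hp⟩ := hf
  obtain ⟨q, hq⟩ := hg
  exact ⟨p * q, fun x => by simp [hp, hq]⟩

lemma PolyFn.sub {f g : ℝ → ℂ} (hf : PolyFn f) (hg : PolyFn g) : PolyFn (fun x => f x - g x) := by
  obtain ⟨p, hp⟩ := hf
  obtain ⟨q, hq⟩ := hg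
  exact ⟨p - q, fun x => by simp [hp, hq]⟩

lemma PolyFn.sum {ι : Type*} (s : Finset ι) {f : ι → ℝ → ℂ} (hf : ∀ i, PolyFn (f i)) :
    PolyFn (fun x => ∑ i ∈ s, f i x) := by
  choose p hp using hf
  exact ⟨∑ i ∈ s, p i, fun x => by simp [hp, Polynomial.eval_finsetSum]⟩

lemma PolyFn.pow {f : ℝ → ℂ} (hf : PolyFn f) (k : ℕ) : PolyFn (fun x => f x ^ k) := by
  obtain ⟨p, hp⟩ := hf
  exact ⟨p ^ k, fun x => by simp [hp]⟩

lemma PolyFn.star {f : ℝ → ℂ} (hf : PolyFn f) : PolyFn (fun x => star (f x)) := by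
  obtain ⟨p, hp⟩ := hf
  refine ⟨p.map (starRingEnd ℂ), fun x => ?_⟩
  have h := Polynomial.eval_map_apply (f := starRingEnd ℂ) (p := p) (x : ℂ)
  rw [Complex.conj_ofReal] at h
  rw [h, ← hp]; rfl

lemma integrable_pow_gauss (k : ℕ) : Integrable (fun y : ℝ => y ^ k * Real.exp (-y ^ 2)) := by
  have h := integrable_rpow_mul_exp_neg_mul_sq (b := 1) one_pos (s := (k : ℝ))
    (by have : (0 : ℝ) ≤ k := Nat.cast_nonneg k
        linarith)
  simpa using h

lemma PolyFn.integrable {f : ℝ → ℂ} (hf : PolyFn f) :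
    Integrable (fun y : ℝ => (Real.exp (-y ^ 2) : ℂ) * f y) := by
  obtain ⟨p, hp⟩ := hf
  have : (fun y : ℝ => (Real.exp (-y ^ 2) : ℂ) * f y) =
      fun y : ℝ => ∑ k ∈ Finset.range (p.natDegree + 1),
        p.coeff k * ((y ^ k * Real.exp (-y ^ 2) : ℝ) : ℂ) := by
    funext y
    rw [hp, Polynomial.eval_eq_sum_range, Finset.mul_sum]
    refine Finset.sum_congr rfl fun k _ => ?_
    push_cast
    ring
  rw [this]
  exact integrable_finsetSum _ fun k _ => ((integrable_pow_gauss k).ofReal).const_mul _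

lemma hasDerivAt_gauss (y : ℝ) :
    HasDerivAt (fun y : ℝ => (Real.exp (-y ^ 2) : ℂ)) (-(2 * y) * (Real.exp (-y ^ 2) : ℂ)) y := by
  have h : HasDerivAt (fun y : ℝ => Real.exp (-y ^ 2)) (Real.exp (-y ^ 2) * (-(2 * y))) y := by
    have := ((hasDerivAt_pow 2 y).neg).exp
    simpa using this
  have h2 := h.ofReal_comp
  convert h2 using 1
  push_cast
  ring

lemma gauss_ibp {f f' : ℝ → ℂ} (hf : PolyFn f) (hf' : PolyFn f')
    (hd : ∀ x, HasDerivAt f (f' x) x) :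
    ∫ y : ℝ, (Real.exp (-y ^ 2) : ℂ) * (f' y - 2 * (y : ℂ) * f y) = 0 := by
  refine integral_eq_zero_of_hasDerivAt_of_integrable
    (f := fun y : ℝ => (Real.exp (-y ^ 2) : ℂ) * f y) (fun x => ?_) ?_ hf.integrable
  · exact ((hasDerivAt_gauss x).mul (hd x)).congr_deriv (by ring)
  · exact (hf'.sub (((PolyFn.const 2).mul PolyFn.id).mul hf)).integrable

/-! ### Matrix polynomial functions -/

section
variable {N : ℕ}

/-- Matrix functions with polynomial entries. -/
def PolyMat (F : ℝ → Matrix (Fin N) (Fin N) ℂ) : Prop := ∀ i j, PolyFn (fun x => F x i j)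

/-- Entrywise derivative relation. -/
def MatD (F F' : ℝ → Matrix (Fin N) (Fin N) ℂ) : Prop :=
  ∀ i j x, HasDerivAt (fun y => F y i j) (F' x i j) x

lemma PolyMat.const (c : Matrix (Fin N) (Fin N) ℂ) : PolyMat (fun _ => c) :=
  fun i j => PolyFn.const (c i j)

lemma PolyMat.add {F G : ℝ → Matrix (Fin N) (Fin N) ℂ} (hF : PolyMat F) (hG : PolyMat G) :
    PolyMat (fun x => F x + G x) := fun i j => (hF i j).add (hG i j)

lemma PolyMat.mul {F G : ℝ → Matrix (Fin N) (Fin N) ℂ} (hF : PolyMat F) (hG : PolyMat G) :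
    PolyMat (fun x => F x * G x) := fun i j => by
  simp only [Matrix.mul_apply]
  exact PolyFn.sum _ fun k => (hF i k).mul (hG k j)

lemma PolyMat.smul {f : ℝ → ℂ} {G : ℝ → Matrix (Fin N) (Fin N) ℂ} (hf : PolyFn f)
    (hG : PolyMat G) : PolyMat (fun x => f x • G x) := fun i j => hf.mul (hG i j)

lemma PolyMat.conjTranspose {F : ℝ → Matrix (Fin N) (Fin N) ℂ} (hF : PolyMat F) :
    PolyMat (fun x => (F x)ᴴ) := fun i j => (hF j i).star

lemma MatD.mul {F G F' G' : ℝ → Matrix (Fin N) (Fin N) ℂ} (hF : MatD F F') (hG : MatD G G') :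
    MatD (fun x => F x * G x) (fun x => F' x * G x + F x * G' x) := fun i j x => by
  simp only [Matrix.mul_apply, Matrix.add_apply]
  rw [← Finset.sum_add_distrib]
  exact HasDerivAt.fun_sum fun k _ => (hF i k x).mul (hG k j x)

lemma MatD.conjTranspose {F F' : ℝ → Matrix (Fin N) (Fin N) ℂ} (hF : MatD F F') :
    MatD (fun x => (F x)ᴴ) (fun x => (F' x)ᴴ) := fun i j x => (hF j i x).star

lemma matInt_add {F G : ℝ → Matrix (Fin N) (Fin N) ℂ} (hF : ∀ i j, Integrable (fun y => F y i j))
    (hG : ∀ i j, Integrable (fun y => G y i j)) :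
    matInt N (fun y => F y + G y) = matInt N F + matInt N G := by
  ext i j
  exact integral_add (hF i j) (hG i j)

lemma matInt_const_mul (c : Matrix (Fin N) (Fin N) ℂ) {F : ℝ → Matrix (Fin N) (Fin N) ℂ}
    (hF : ∀ i j, Integrable (fun y => F y i j)) :
    matInt N (fun y => c * F y) = c * matInt N F := by
  ext i j
  simp only [matInt, Matrix.of_apply, Matrix.mul_apply]
  rw [integral_finsetSum _ fun k _ => (hF k j).const_mul _]
  exact Finset.sum_congr rfl fun k _ => integral_const_mul _ _

lemma matInt_mul_const (c : Matrix (Fin N) (Fin N) ℂ) {F : ℝ → Matrix (Fin N) (Fin N) ℂ}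
    (hF : ∀ i j, Integrable (fun y => F y i j)) :
    matInt N (fun y => F y * c) = matInt N F * c := by
  ext i j
  simp only [matInt, Matrix.of_apply, Matrix.mul_apply]
  rw [integral_finsetSum _ fun k _ => (hF i k).mul_const _]
  exact Finset.sum_congr rfl fun k _ => integral_mul_const _ _

/-! ### The Hermite polynomials and the matrix `L` -/

lemma hermiteF_polyFn (m : ℕ) : PolyFn (fun x => (hermiteF m x : ℂ)) := by
  induction m using Nat.strong_induction_on with
  | _ m ih =>
    match m with
    | 0 => simpa [hermiteF] using PolyFn.const 1
    | 1 => simpa [hermiteF] using (PolyFn.const 2).mul PolyFn.id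
    | (m + 2) =>
      have h1 := ((PolyFn.const 2).mul PolyFn.id).mul (ih (m + 1) (by omega))
      have h2 := (PolyFn.const (2 * (m + 1))).mul (ih m (by omega))
      simpa [hermiteF] using h1.sub h2

lemma hermiteF_deriv (m : ℕ) (x : ℝ) :
    HasDerivAt (hermiteF m) (2 * m * hermiteF (m - 1) x) x := by
  induction m using Nat.strong_induction_on with
  | _ m ih =>
    match m with
    | 0 => simpa [hermiteF] using (hasDerivAt_const x (1 : ℝ))
    | 1 =>
      have : hermiteF 1 = fun x => 2 * x := by funext x; simp [hermiteF]
      rw [this]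
      simpa [hermiteF] using (hasDerivAt_id x).const_mul 2
    | (m + 2) =>
      have e : hermiteF (m + 2) =
          fun x => 2 * x * hermiteF (m + 1) x - 2 * (m + 1) * hermiteF m x := by
        funext x; simp [hermiteF]
      have h0 := ih m (by omega)
      have h1 := ih (m + 1) (by omega)
      rw [e]
      have h2 := (((hasDerivAt_id x).const_mul 2).mul h1).sub (h0.const_mul (2 * ((m : ℝ) + 1)))
      refine h2.congr_deriv ?_
      match m with
      | 0 => simp [hermiteF]; ring
      | (m + 1) =>
        have e2 : hermiteF (m + 2) x =
          2 * x * hermiteF (m + 1) x - 2 * (m + 1) * hermiteF m x := by simp [hermiteF]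
        simp only [Nat.add_sub_cancel, id, show m + 1 + 2 - 1 = m + 2 by omega,
          show m + 1 + 1 = m + 2 by omega]
        rw [e2]
        push_cast
        ring

/-- Normalised Hermite polynomial `H_m / m!`. -/
noncomputable def hN (m : ℕ) (x : ℝ) : ℝ := hermiteF m x / Nat.factorial m

lemma hN_deriv (m : ℕ) (x : ℝ) : HasDerivAt (hN (m + 1)) (2 * hN m x) x := by
  have h := (hermiteF_deriv (m + 1) x).div_const (Nat.factorial (m + 1) : ℝ)
  refine h.congr_deriv ?_
  have h1 : (Nat.factorial m : ℝ) ≠ 0 := by positivity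
  have h2 : (m : ℝ) + 1 ≠ 0 := by positivity
  simp only [hN, Nat.add_sub_cancel, Nat.factorial_succ]
  push_cast
  field_simp

lemma hN_rec (m : ℕ) (x : ℝ) :
    ((m : ℝ) + 2) * hN (m + 2) x = 2 * x * hN (m + 1) x - 2 * hN m x := by
  have h1 : (Nat.factorial m : ℝ) ≠ 0 := by positivity
  have h2 : (m : ℝ) + 1 ≠ 0 := by positivity
  have h3 : (m : ℝ) + 2 ≠ 0 := by positivity
  have h4 : (m : ℝ) + 1 + 1 ≠ 0 := by positivity
  simp only [hN, hermiteF, Nat.factorial_succ]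
  push_cast
  field_simp
  ring

lemma Lmat_apply (α : Fin N → ℝ) (x : ℝ) (j k : Fin N) :
    Lmat N α x j k = if (k : ℕ) ≤ (j : ℕ) then
      ((hN ((j : ℕ) - (k : ℕ)) x * (α j / α k) : ℝ) : ℂ) else 0 := rfl

lemma Amat_mul_apply (α : Fin N → ℝ) (M : Matrix (Fin N) (Fin N) ℂ) (j k : Fin N) :
    (Amat N α * M) j k = if h : 0 < (j : ℕ) then
      ((2 * α j / α ⟨j - 1, by omega⟩ : ℝ) : ℂ) * M ⟨j - 1, by omega⟩ k else 0 := by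
  rw [Matrix.mul_apply]
  split_ifs with h
  · rw [Finset.sum_eq_single (⟨j - 1, by omega⟩ : Fin N)]
    · simp only [Amat, Matrix.of_apply]
      rw [if_pos (by omega)]
    · intro b _ hb
      simp only [Amat, Matrix.of_apply]
      rw [if_neg, zero_mul]
      intro h2
      apply hb
      ext
      simp only
      omega
    · simp
  · refine Finset.sum_eq_zero fun b _ => ?_
    simp only [Amat, Matrix.of_apply]
    rw [if_neg (by omega), zero_mul]

lemma AL_apply (α : Fin N → ℝ) (hα : ∀ j, 0 < α j) (x : ℝ) (j k : Fin N) :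
    (Amat N α * Lmat N α x) j k = if (k : ℕ) + 1 ≤ (j : ℕ) then
      ((2 * hN ((j : ℕ) - (k : ℕ) - 1) x * (α j / α k) : ℝ) : ℂ) else 0 := by
  rw [Amat_mul_apply]
  by_cases h : (k : ℕ) + 1 ≤ (j : ℕ)
  · rw [dif_pos (by omega), if_pos h, Lmat_apply, if_pos (by simp only; omega),
      ← Complex.ofReal_mul]
    congr 1
    simp only
    rw [show (j : ℕ) - 1 - k = j - k - 1 by omega]
    have h1 := (hα k).ne'
    have h2 := (hα ⟨j - 1, by omega⟩).ne'
    field_simp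
  · rw [if_neg h]
    split_ifs with h0
    · rw [Lmat_apply, if_neg (by simp only; omega), mul_zero]
    · rfl

lemma AAL_apply (α : Fin N → ℝ) (hα : ∀ j, 0 < α j) (x : ℝ) (j k : Fin N) :
    (Amat N α * (Amat N α * Lmat N α x)) j k = if (k : ℕ) + 2 ≤ (j : ℕ) then
      ((4 * hN ((j : ℕ) - (k : ℕ) - 2) x * (α j / α k) : ℝ) : ℂ) else 0 := by
  rw [Amat_mul_apply]
  by_cases h : (k : ℕ) + 2 ≤ (j : ℕ)
  · rw [dif_pos (by omega), if_pos h, AL_apply α hα, if_pos (by simp only; omega),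
      ← Complex.ofReal_mul]
    congr 1
    simp only
    rw [show (j : ℕ) - 1 - k - 1 = j - k - 2 by omega]
    have h1 := (hα k).ne'
    have h2 := (hα ⟨j - 1, by omega⟩).ne'
    field_simp
    ring
  · rw [if_neg h]
    split_ifs with h0
    · rw [AL_apply α hα, if_neg (by simp only; omega), mul_zero]
    · rfl

lemma Lmat_polyMat (α : Fin N → ℝ) : PolyMat (Lmat N α) := fun j k => by
  simp only [Lmat, Matrix.of_apply]
  split_ifs with h
  · have := (hermiteF_polyFn ((j : ℕ) - k)).mul
      (PolyFn.const ((((Nat.factorial ((j : ℕ) - k) : ℝ)⁻¹ * (α j / α k) : ℝ) : ℂ)))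
    convert this using 2
    push_cast
    ring
  · exact PolyFn.const 0

lemma Lmat_deriv (α : Fin N → ℝ) (hα : ∀ j, 0 < α j) :
    MatD (Lmat N α) (fun x => Amat N α * Lmat N α x) := fun j k x => by
  simp only [AL_apply α hα, Lmat_apply]
  by_cases h : (k : ℕ) + 1 ≤ j
  · rw [if_pos h]
    simp only [if_pos (show (k : ℕ) ≤ j by omega)]
    have := hN_deriv ((j : ℕ) - k - 1) x
    rw [show (j : ℕ) - k - 1 + 1 = j - k by omega] at this
    exact (this.mul_const _).ofReal_comp
  · rw [if_neg h]
    by_cases h2 : (k : ℕ) ≤ j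
    · simp only [if_pos h2, show (j : ℕ) - k = 0 by omega, hN, hermiteF]
      exact hasDerivAt_const _ _
    · simp only [if_neg h2]
      exact hasDerivAt_const _ _

/-- The matrix `T(x) = J - xA + A²/2`. -/
noncomputable def Tmat (N : ℕ) (α : Fin N → ℝ) (x : ℝ) : Matrix (Fin N) (Fin N) ℂ :=
  Jmat N - (x : ℂ) • Amat N α + (1 / 2 : ℂ) • (Amat N α * Amat N α)

lemma T_mul_L (α : Fin N → ℝ) (hα : ∀ j, 0 < α j) (x : ℝ) :
    Tmat N α x * Lmat N α x = Lmat N α x * Jmat N := by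
  ext j k
  simp only [Tmat, Matrix.add_mul, Matrix.sub_mul, Matrix.smul_mul, Matrix.mul_assoc,
    Matrix.add_apply, Matrix.sub_apply, Matrix.smul_apply, AL_apply α hα, AAL_apply α hα, Jmat,
    Matrix.diagonal_mul, Matrix.mul_diagonal, Lmat_apply, smul_eq_mul]
  by_cases h2 : (k : ℕ) + 2 ≤ j
  · obtain ⟨m, hm⟩ := Nat.exists_eq_add_of_le h2
    rw [if_pos h2, if_pos (by omega), if_pos (by omega)]
    simp only [hm, show (k : ℕ) + 2 + m - k = m + 2 by omega, show m + 2 - 1 = m + 1 by omega,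
      show m + 2 - 2 = m by omega]
    have := congrArg (fun r : ℝ => (r : ℂ)) (hN_rec m x)
    push_cast at this ⊢
    linear_combination (α j / α k : ℂ) * this
  · rw [if_neg h2]
    by_cases h1 : (k : ℕ) + 1 ≤ j
    · have hm : (j : ℕ) = k + 1 := by omega
      rw [if_pos h1, if_pos (by omega)]
      simp only [hm, show (k : ℕ) + 1 - k = 1 by omega, show 1 - 1 = 0 by omega, hN, hermiteF]
      push_cast
      simp
      ring
    · rw [if_neg h1]
      by_cases h0 : (k : ℕ) ≤ j
      · have hm : (j : ℕ) = k := by omega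
        rw [if_pos h0]
        simp only [hm]
        ring
      · rw [if_neg h0]
        ring
end

section
variable {N : ℕ}

/-! ### Matrix polynomials and the inner product -/

/-- Evaluation of a polynomial with matrix coefficients at a real point. -/
noncomputable def ev (p : Polynomial (Matrix (Fin N) (Fin N) ℂ)) (x : ℝ) :
    Matrix (Fin N) (Fin N) ℂ := p.sum fun k a => ((x : ℂ) ^ k) • a

lemma ev_add (p q : Polynomial (Matrix (Fin N) (Fin N) ℂ)) (x : ℝ) :
    ev (p + q) x = ev p x + ev q x :=
  Polynomial.sum_add_index p q _ (fun _ => by simp) (fun _ _ _ => by simp)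

lemma ev_monomial (k : ℕ) (a : Matrix (Fin N) (Fin N) ℂ) (x : ℝ) :
    ev (Polynomial.monomial k a) x = ((x : ℂ) ^ k) • a :=
  Polynomial.sum_monomial_index a _ (by simp)

lemma ev_zero (x : ℝ) : ev (0 : Polynomial (Matrix (Fin N) (Fin N) ℂ)) x = 0 := by
  simp [ev]

lemma ev_C_mul (c : Matrix (Fin N) (Fin N) ℂ) (p : Polynomial (Matrix (Fin N) (Fin N) ℂ))
    (x : ℝ) : ev (Polynomial.C c * p) x = c * ev p x := by
  induction p using Polynomial.induction_on' with
  | add p q hp hq => rw [mul_add, ev_add, hp, hq, ev_add, mul_add]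
  | monomial k a => rw [Polynomial.C_mul_monomial, ev_monomial, ev_monomial, Matrix.mul_smul]

lemma ev_mul_C (c : Matrix (Fin N) (Fin N) ℂ) (p : Polynomial (Matrix (Fin N) (Fin N) ℂ))
    (x : ℝ) : ev (p * Polynomial.C c) x = ev p x * c := by
  induction p using Polynomial.induction_on' with
  | add p q hp hq => rw [add_mul, ev_add, hp, hq, ev_add, add_mul]
  | monomial k a => rw [Polynomial.monomial_mul_C, ev_monomial, ev_monomial, Matrix.smul_mul]

lemma ev_X_mul (p : Polynomial (Matrix (Fin N) (Fin N) ℂ)) (x : ℝ) :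
    ev (Polynomial.X * p) x = (x : ℂ) • ev p x := by
  induction p using Polynomial.induction_on' with
  | add p q hp hq => rw [mul_add, ev_add, hp, hq, ev_add, smul_add]
  | monomial k a =>
    rw [Polynomial.X_mul_monomial, ev_monomial, ev_monomial, smul_smul, pow_succ']

lemma ev_neg (p : Polynomial (Matrix (Fin N) (Fin N) ℂ)) (x : ℝ) : ev (-p) x = -ev p x := by
  rw [eq_neg_iff_add_eq_zero, ← ev_add, neg_add_cancel, ev_zero]

lemma ev_sub (p q : Polynomial (Matrix (Fin N) (Fin N) ℂ)) (x : ℝ) :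
    ev (p - q) x = ev p x - ev q x := by
  rw [sub_eq_add_neg, ev_add, ev_neg, sub_eq_add_neg]

lemma ev_polyMat (p : Polynomial (Matrix (Fin N) (Fin N) ℂ)) : PolyMat (ev p) := by
  induction p using Polynomial.induction_on' with
  | add p q hp hq =>
    have : ev (p + q) = fun x => ev p x + ev q x := funext fun x => ev_add p q x
    rw [this]
    exact hp.add hq
  | monomial k a =>
    have : ev (Polynomial.monomial k a) = fun x : ℝ => ((x : ℂ) ^ k) • a :=
      funext fun x => ev_monomial k a x
    rw [this]
    exact PolyMat.smul (PolyFn.id.pow k) (PolyMat.const a)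

lemma ev_deriv (p : Polynomial (Matrix (Fin N) (Fin N) ℂ)) :
    MatD (ev p) (ev (Polynomial.derivative p)) := by
  induction p using Polynomial.induction_on' with
  | add p q hp hq =>
    intro i j x
    simp only [Polynomial.derivative_add, ev_add, Matrix.add_apply]
    exact (hp i j x).add (hq i j x)
  | monomial k a =>
    intro i j x
    simp only [Polynomial.derivative_monomial, ev_monomial, Matrix.smul_apply, smul_eq_mul]
    have h := ((hasDerivAt_id x).ofReal_comp.pow k).mul_const (a i j)
    refine h.congr_deriv ?_
    have e : (a * (k : Matrix (Fin N) (Fin N) ℂ)) i j = a i j * k := by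
      rw [← nsmul_eq_mul', Matrix.smul_apply, nsmul_eq_mul, mul_comm]
    rw [e]
    simp
    ring

/-- The inner product on matrix polynomials. -/
noncomputable def ip (α : Fin N → ℝ) (p q : Polynomial (Matrix (Fin N) (Fin N) ℂ)) :
    Matrix (Fin N) (Fin N) ℂ := matIP N (hermW N α) (ev p) (ev q)

lemma polyMat_integrable {F : ℝ → Matrix (Fin N) (Fin N) ℂ} (hF : PolyMat F) (i j : Fin N) :
    Integrable (fun y : ℝ => ((Real.exp (-y ^ 2) : ℂ) • F y) i j) := (hF i j).integrable

lemma ip_integrand (α : Fin N → ℝ) (F G : Matrix (Fin N) (Fin N) ℂ) (y : ℝ) :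
    F * hermW N α y * Gᴴ =
      (Real.exp (-y ^ 2) : ℂ) • (F * Lmat N α y * ((Lmat N α y)ᴴ * Gᴴ)) := by
  have : hermW N α y = (Real.exp (-y ^ 2) : ℂ) • (Lmat N α y * (Lmat N α y)ᴴ) := by
    ext i j
    simp [hermW]
  rw [this, Matrix.mul_smul, Matrix.smul_mul]
  simp only [Matrix.mul_assoc]

lemma ip_integrable (α : Fin N → ℝ) (p q : Polynomial (Matrix (Fin N) (Fin N) ℂ)) (i j : Fin N) :
    Integrable (fun y : ℝ => (ev p y * hermW N α y * (ev q y)ᴴ) i j) := by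
  simp only [ip_integrand]
  exact polyMat_integrable (((ev_polyMat p).mul (Lmat_polyMat α)).mul
    ((Lmat_polyMat α).conjTranspose.mul (ev_polyMat q).conjTranspose)) i j

lemma ip_add_left (α : Fin N → ℝ) (p q r : Polynomial (Matrix (Fin N) (Fin N) ℂ)) :
    ip α (p + q) r = ip α p r + ip α q r := by
  unfold ip matIP
  rw [← matInt_add (ip_integrable α p r) (ip_integrable α q r)]
  simp only [ev_add, Matrix.add_mul]

lemma ip_add_right (α : Fin N → ℝ) (p q r : Polynomial (Matrix (Fin N) (Fin N) ℂ)) :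
    ip α p (q + r) = ip α p q + ip α p r := by
  unfold ip matIP
  rw [← matInt_add (ip_integrable α p q) (ip_integrable α p r)]
  simp only [ev_add, Matrix.conjTranspose_add, Matrix.mul_add]

lemma ip_C_mul_left (α : Fin N → ℝ) (c : Matrix (Fin N) (Fin N) ℂ)
    (p q : Polynomial (Matrix (Fin N) (Fin N) ℂ)) :
    ip α (Polynomial.C c * p) q = c * ip α p q := by
  unfold ip matIP
  rw [← matInt_const_mul c (ip_integrable α p q)]
  simp only [ev_C_mul, Matrix.mul_assoc]

lemma ip_C_mul_right (α : Fin N → ℝ) (c : Matrix (Fin N) (Fin N) ℂ)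
    (p q : Polynomial (Matrix (Fin N) (Fin N) ℂ)) :
    ip α p (Polynomial.C c * q) = ip α p q * cᴴ := by
  unfold ip matIP
  rw [← matInt_mul_const cᴴ (ip_integrable α p q)]
  simp only [ev_C_mul, Matrix.conjTranspose_mul, Matrix.mul_assoc]

lemma ip_sub_left (α : Fin N → ℝ) (p q r : Polynomial (Matrix (Fin N) (Fin N) ℂ)) :
    ip α (p - q) r = ip α p r - ip α q r := by
  rw [eq_sub_iff_add_eq, ← ip_add_left, sub_add_cancel]

lemma ip_sub_right (α : Fin N → ℝ) (p q r : Polynomial (Matrix (Fin N) (Fin N) ℂ)) :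
    ip α p (q - r) = ip α p q - ip α p r := by
  rw [eq_sub_iff_add_eq, ← ip_add_right, sub_add_cancel]

lemma ip_X_mul (α : Fin N → ℝ) (p q : Polynomial (Matrix (Fin N) (Fin N) ℂ)) :
    ip α (Polynomial.X * p) q = ip α p (Polynomial.X * q) := by
  unfold ip matIP
  congr 1
  funext y
  simp only [ev_X_mul, Matrix.conjTranspose_smul, Matrix.smul_mul, Matrix.mul_smul]
  simp

/-- The operator sending p to its derivative plus pA. -/
noncomputable def Dop (α : Fin N → ℝ) (p : Polynomial (Matrix (Fin N) (Fin N) ℂ)) :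
    Polynomial (Matrix (Fin N) (Fin N) ℂ) :=
  Polynomial.derivative p + p * Polynomial.C (Amat N α)

/-- The operator `p ↦ pT`. -/
noncomputable def Tmul (α : Fin N → ℝ) (p : Polynomial (Matrix (Fin N) (Fin N) ℂ)) :
    Polynomial (Matrix (Fin N) (Fin N) ℂ) :=
  p * Polynomial.C (Jmat N + (1 / 2 : ℂ) • (Amat N α * Amat N α))
    - Polynomial.X * (p * Polynomial.C (Amat N α))

lemma ev_Dop (α : Fin N → ℝ) (p : Polynomial (Matrix (Fin N) (Fin N) ℂ)) (x : ℝ) :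
    ev (Dop α p) x = ev (Polynomial.derivative p) x + ev p x * Amat N α := by
  rw [Dop, ev_add, ev_mul_C]

lemma ev_Tmul (α : Fin N → ℝ) (p : Polynomial (Matrix (Fin N) (Fin N) ℂ)) (x : ℝ) :
    ev (Tmul α p) x = ev p x * Tmat N α x := by
  rw [Tmul, ev_sub, ev_mul_C, ev_X_mul, ev_mul_C, Tmat]
  simp only [Matrix.mul_add, Matrix.mul_sub, Matrix.mul_smul]
  abel

lemma ip_Tmul (α : Fin N → ℝ) (hα : ∀ j, 0 < α j)
    (p q : Polynomial (Matrix (Fin N) (Fin N) ℂ)) :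
    ip α (Tmul α p) q = ip α p (Tmul α q) := by
  unfold ip matIP
  congr 1
  funext y
  have h := T_mul_L α hα y
  have hJ : (Jmat N)ᴴ = Jmat N := by
    simp only [Jmat, Matrix.diagonal_conjTranspose]
    congr 1
    funext j
    simp
  have h2 : (Lmat N α y)ᴴ * (Tmat N α y)ᴴ = Jmat N * (Lmat N α y)ᴴ := by
    rw [← Matrix.conjTranspose_mul, h, Matrix.conjTranspose_mul, hJ]
  rw [ip_integrand, ip_integrand, ev_Tmul, ev_Tmul, Matrix.conjTranspose_mul]
  congr 1
  calc ev p y * Tmat N α y * Lmat N α y * ((Lmat N α y)ᴴ * (ev q y)ᴴ)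
      = ev p y * (Tmat N α y * Lmat N α y) * ((Lmat N α y)ᴴ * (ev q y)ᴴ) := by
        simp only [Matrix.mul_assoc]
    _ = ev p y * Lmat N α y * (((Lmat N α y)ᴴ * (Tmat N α y)ᴴ) * (ev q y)ᴴ) := by
        rw [h, h2]
        simp only [Matrix.mul_assoc]
    _ = _ := by
        simp only [Matrix.mul_assoc]

lemma ibp_alg (p p' q q' L A : Matrix (Fin N) (Fin N) ℂ) (y : ℂ) (i j : Fin N) :
    ((p' + p * A) * L * (Lᴴ * qᴴ) + p * L * (Lᴴ * (q' + q * A)ᴴ) -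
      ((y • p) * L * (Lᴴ * qᴴ) + (y • p) * L * (Lᴴ * qᴴ))) i j =
    ((p' * L + p * (A * L)) * (Lᴴ * qᴴ) + p * L * ((A * L)ᴴ * qᴴ + Lᴴ * q'ᴴ)) i j -
      2 * y * (p * L * (Lᴴ * qᴴ)) i j := by
  have e : 2 * y * (p * L * (Lᴴ * qᴴ)) i j = ((2 * y) • (p * L * (Lᴴ * qᴴ))) i j := by
    rw [Matrix.smul_apply, smul_eq_mul]
  rw [e, ← Matrix.sub_apply]
  refine congrFun (congrFun ?_ i) j
  simp only [Matrix.conjTranspose_add, Matrix.conjTranspose_mul, Matrix.add_mul, Matrix.mul_add,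
    Matrix.smul_mul, Matrix.mul_assoc, two_mul, add_smul]
  abel

lemma ip_Dop (α : Fin N → ℝ) (hα : ∀ j, 0 < α j)
    (p q : Polynomial (Matrix (Fin N) (Fin N) ℂ)) :
    ip α (Dop α p) q + ip α p (Dop α q) =
      ip α (Polynomial.X * p) q + ip α (Polynomial.X * p) q := by
  have hL := Lmat_polyMat α
  have hA : PolyMat (fun _ : ℝ => Amat N α) := PolyMat.const _
  have d1 := (ev_deriv p).mul (Lmat_deriv α hα)
  have d2 := (Lmat_deriv α hα).conjTranspose.mul (ev_deriv q).conjTranspose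
  have d := d1.mul d2
  have hp := ev_polyMat p
  have hq := (ev_polyMat q).conjTranspose
  have hp' := ev_polyMat (Polynomial.derivative p)
  have hq' := (ev_polyMat (Polynomial.derivative q)).conjTranspose
  have P0 := (hp.mul hL).mul (hL.conjTranspose.mul hq)
  have P1 := ((((hp'.mul hL).add (hp.mul (hA.mul hL))).mul (hL.conjTranspose.mul hq))).add
    ((hp.mul hL).mul (((hA.mul hL).conjTranspose.mul hq).add (hL.conjTranspose.mul hq')))
  rw [← sub_eq_zero]
  unfold ip matIP
  rw [← matInt_add (ip_integrable α _ _) (ip_integrable α _ _),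
    ← matInt_add (ip_integrable α _ _) (ip_integrable α _ _)]
  ext i j
  simp only [matInt, Matrix.sub_apply, Matrix.of_apply, Matrix.zero_apply]
  rw [← integral_sub]
  · rw [← gauss_ibp (P0 i j) (P1 i j) (fun x => d i j x)]
    congr 1
    funext y
    rw [← Matrix.sub_apply]
    simp only [ip_integrand]
    rw [← smul_add, ← smul_add, ← smul_sub, Matrix.smul_apply, smul_eq_mul]
    congr 1
    rw [ev_X_mul, ev_Dop, ev_Dop]
    exact ibp_alg _ _ _ _ _ _ _ i j
  · exact (ip_integrable α _ _ i j).add (ip_integrable α _ _ i j)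
  · exact (ip_integrable α _ _ i j).add (ip_integrable α _ _ i j)

end

section
variable {N : ℕ}

/-! ### Orthogonality arguments -/

lemma ev_sum {ι : Type*} (s : Finset ι) (f : ι → Polynomial (Matrix (Fin N) (Fin N) ℂ)) (x : ℝ) :
    ev (∑ i ∈ s, f i) x = ∑ i ∈ s, ev (f i) x := by
  classical
  induction s using Finset.induction_on with
  | empty => simp [ev_zero]
  | insert a s ha ih => rw [Finset.sum_insert ha, Finset.sum_insert ha, ev_add, ih]

/-- A sequence of monic matrix polynomials, the `n`-th one of degree `n`. -/
def MonicSeq (p : ℕ → Polynomial (Matrix (Fin N) (Fin N) ℂ)) : Prop :=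
  (∀ n, (p n).coeff n = 1) ∧ ∀ n k, n < k → (p n).coeff k = 0

variable {α : Fin N → ℝ} {p : ℕ → Polynomial (Matrix (Fin N) (Fin N) ℂ)}

lemma reduce_deg (hmon : MonicSeq p) {q : Polynomial (Matrix (Fin N) (Fin N) ℂ)} {m : ℕ}
    (hq : ∀ k, m + 1 ≤ k → q.coeff k = 0) :
    ∀ k, m ≤ k → (q - Polynomial.C (q.coeff m) * p m).coeff k = 0 := by
  intro k hk
  rw [Polynomial.coeff_sub, Polynomial.coeff_C_mul]
  rcases Nat.eq_or_lt_of_le hk with rfl | h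
  · rw [hmon.1, mul_one, sub_self]
  · rw [hmon.2 m k h, hq k h, mul_zero, sub_zero]

lemma orth_right (hmon : MonicSeq p) (horth : ∀ n m, n ≠ m → ip α (p n) (p m) = 0) (n m : ℕ)
    (hm : m ≤ n) : ∀ q : Polynomial (Matrix (Fin N) (Fin N) ℂ), (∀ k, m ≤ k → q.coeff k = 0) →
    ip α (p n) q = 0 := by
  induction m with
  | zero =>
    intro q hq
    have : q = Polynomial.C 0 * q := by
      ext1 k
      simp [hq k (Nat.zero_le k)]
    rw [this, ip_C_mul_right]
    simp
  | succ m ih =>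
    intro q hq
    have h := ih (by omega) _ (reduce_deg hmon hq)
    rw [ip_sub_right, ip_C_mul_right, horth n m (by omega), zero_mul, sub_zero] at h
    exact h

lemma orth_left (hmon : MonicSeq p) (horth : ∀ n m, n ≠ m → ip α (p n) (p m) = 0) (n m : ℕ)
    (hm : m ≤ n) : ∀ q : Polynomial (Matrix (Fin N) (Fin N) ℂ), (∀ k, m ≤ k → q.coeff k = 0) →
    ip α q (p n) = 0 := by
  induction m with
  | zero =>
    intro q hq
    have : q = Polynomial.C 0 * q := by
      ext1 k
      simp [hq k (Nat.zero_le k)]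
    rw [this, ip_C_mul_left]
    simp
  | succ m ih =>
    intro q hq
    have h := ih (by omega) _ (reduce_deg hmon hq)
    rw [ip_sub_left, ip_C_mul_left, horth m n (by omega), mul_zero, sub_zero] at h
    exact h

lemma eq_zero_of_orth (hmon : MonicSeq p) (horth : ∀ n m, n ≠ m → ip α (p n) (p m) = 0)
    (hpos : ∀ n, IsUnit (ip α (p n) (p n))) (n : ℕ) :
    ∀ q : Polynomial (Matrix (Fin N) (Fin N) ℂ), (∀ k, n ≤ k → q.coeff k = 0) →
      (∀ k, k < n → ip α q (p k) = 0) → q = 0 := by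
  induction n with
  | zero =>
    intro q hq _
    ext1 k
    simp [hq k (Nat.zero_le k)]
  | succ n ih =>
    intro q hq ho
    have h : q - Polynomial.C (q.coeff n) * p n = 0 := by
      refine ih _ (reduce_deg hmon hq) fun k hk => ?_
      rw [ip_sub_left, ip_C_mul_left, ho k (by omega), horth n k (by omega), mul_zero, sub_zero]
    rw [sub_eq_zero] at h
    have h2 := ho n (by omega)
    rw [h, ip_C_mul_left] at h2
    rw [h, ((hpos n).mul_left_eq_zero).1 h2]
    simp

lemma eq_of_ev (hmon : MonicSeq p) (horth : ∀ n m, n ≠ m → ip α (p n) (p m) = 0)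
    (hpos : ∀ n, IsUnit (ip α (p n) (p n))) {q r : Polynomial (Matrix (Fin N) (Fin N) ℂ)}
    (h : ∀ x, ev q x = ev r x) : q = r := by
  rw [← sub_eq_zero]
  refine eq_zero_of_orth hmon horth hpos ((q - r).natDegree + 1) _
    (fun k hk => Polynomial.coeff_eq_zero_of_natDegree_lt (by omega)) fun k _ => ?_
  rw [ip_sub_left]
  simp only [ip, show ev q = ev r from funext h, sub_self]

lemma coeff_Dop (q : Polynomial (Matrix (Fin N) (Fin N) ℂ)) (k : ℕ) :
    (Dop α q).coeff k = q.coeff (k + 1) * ((k : Matrix (Fin N) (Fin N) ℂ) + 1) +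
      q.coeff k * Amat N α := by
  rw [Dop, Polynomial.coeff_add, Polynomial.coeff_derivative, Polynomial.coeff_mul_C]

lemma coeff_Tmul_succ (q : Polynomial (Matrix (Fin N) (Fin N) ℂ)) (k : ℕ) :
    (Tmul α q).coeff (k + 1) =
      q.coeff (k + 1) * (Jmat N + (1 / 2 : ℂ) • (Amat N α * Amat N α)) -
      q.coeff k * Amat N α := by
  rw [Tmul, Polynomial.coeff_sub, Polynomial.coeff_mul_C, Polynomial.coeff_X_mul,
    Polynomial.coeff_mul_C]

lemma ip_Dop_self (hmon : MonicSeq p) (horth : ∀ n m, n ≠ m → ip α (p n) (p m) = 0) (n : ℕ) :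
    ip α (Dop α (p n)) (p n) = Amat N α * ip α (p n) (p n) ∧
    ip α (p n) (Dop α (p n)) = ip α (p n) (p n) * (Amat N α)ᴴ := by
  have hdeg : ∀ k, n ≤ k → (Dop α (p n) - Polynomial.C (Amat N α) * p n).coeff k = 0 := by
    intro k hk
    rw [Polynomial.coeff_sub, coeff_Dop, Polynomial.coeff_C_mul, hmon.2 n (k + 1) (by omega),
      zero_mul, zero_add]
    rcases Nat.eq_or_lt_of_le hk with rfl | h
    · rw [hmon.1, mul_one, one_mul, sub_self]
    · rw [hmon.2 n k h, mul_zero, zero_mul, sub_self]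
  have h1 := orth_left hmon horth n n le_rfl _ hdeg
  have h2 := orth_right hmon horth n n le_rfl _ hdeg
  rw [ip_sub_left, ip_C_mul_left, sub_eq_zero] at h1
  rw [ip_sub_right, ip_C_mul_right, sub_eq_zero] at h2
  exact ⟨h1, h2⟩

/-- The first order relation: the derivative of P_n plus P_n A equals A P_n + 2 C(n) P_{n-1}. -/
lemma Dop_poly (hα : ∀ j, 0 < α j) (hmon : MonicSeq p)
    (horth : ∀ n m, n ≠ m → ip α (p n) (p m) = 0)
    (hpos : ∀ n, IsUnit (ip α (p n) (p n))) {C : ℕ → Matrix (Fin N) (Fin N) ℂ}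
    (hCH : ∀ n, C (n + 1) * ip α (p n) (p n) = ip α (p (n + 1)) (p (n + 1))) (m : ℕ) :
    Dop α (p (m + 1)) = Polynomial.C (Amat N α) * p (m + 1) +
      Polynomial.C (C (m + 1) + C (m + 1)) * p m := by
  rw [← sub_eq_zero]
  refine eq_zero_of_orth hmon horth hpos (m + 1) _ (fun k hk => ?_) (fun k hk => ?_)
  · rw [Polynomial.coeff_sub, coeff_Dop, Polynomial.coeff_add, Polynomial.coeff_C_mul,
      Polynomial.coeff_C_mul, hmon.2 (m + 1) (k + 1) (by omega), hmon.2 m k (by omega)]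
    rcases Nat.eq_or_lt_of_le hk with rfl | h
    · simp [hmon.1]
    · simp [hmon.2 (m + 1) k h]
  · rw [ip_sub_left, ip_add_left, ip_C_mul_left, ip_C_mul_left, horth (m + 1) k (by omega),
      mul_zero, zero_add]
    have hD := ip_Dop α hα (p (m + 1)) (p k)
    have h0 : ip α (p (m + 1)) (Dop α (p k)) = 0 := by
      refine orth_right hmon horth (m + 1) (m + 1) le_rfl _ fun l hl => ?_
      rw [coeff_Dop, hmon.2 k (l + 1) (by omega), hmon.2 k l (by omega), zero_mul, zero_mul,
        zero_add]
    rw [h0, add_zero, ip_X_mul] at hD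
    rw [hD]
    rcases Nat.eq_or_lt_of_le (show k ≤ m by omega) with rfl | h
    · have h1 : ip α (p (k + 1)) (Polynomial.X * p k - p (k + 1)) = 0 := by
        refine orth_right hmon horth (k + 1) (k + 1) le_rfl _ fun l hl => ?_
        obtain ⟨l, rfl⟩ : ∃ l', l = l' + 1 := ⟨l - 1, by omega⟩
        rw [Polynomial.coeff_sub, Polynomial.coeff_X_mul]
        rcases Nat.eq_or_lt_of_le (show k ≤ l by omega) with rfl | h
        · rw [hmon.1, hmon.1, sub_self]
        · rw [hmon.2 k l h, hmon.2 (k + 1) (l + 1) (by omega), sub_self]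
      rw [ip_sub_right, sub_eq_zero] at h1
      rw [h1, Matrix.add_mul, hCH, sub_self]
    · have h1 : ip α (p (m + 1)) (Polynomial.X * p k) = 0 := by
        refine orth_right hmon horth (m + 1) (m + 1) le_rfl _ fun l hl => ?_
        obtain ⟨l, rfl⟩ : ∃ l', l = l' + 1 := ⟨l - 1, by omega⟩
        rw [Polynomial.coeff_X_mul, hmon.2 k l (by omega)]
      rw [h1, horth m k (by omega)]
      simp

/-- The relation for polynomials. -/
lemma casimir_poly (hα : ∀ j, 0 < α j) (hmon : MonicSeq p)
    (horth : ∀ n m, n ≠ m → ip α (p n) (p m) = 0)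
    (hpos : ∀ n, IsUnit (ip α (p n) (p n))) {B C : ℕ → Matrix (Fin N) (Fin N) ℂ}
    (hCH : ∀ n, C (n + 1) * ip α (p n) (p n) = ip α (p (n + 1)) (p (n + 1)))
    (hrecS : ∀ n, Polynomial.X * p (n + 1) = p (n + 2) +
      Polynomial.C (B (n + 1)) * p (n + 1) + Polynomial.C (C (n + 1)) * p n)
    (hrec0 : Polynomial.X * p 0 = p 1 + Polynomial.C (B 0) * p 0) (m : ℕ) :
    Tmul α (p (m + 1)) = Polynomial.C (-(Amat N α)) * p (m + 2) +
      Polynomial.C (((m + 1 : ℕ) : ℂ) • (1 : Matrix (Fin N) (Fin N) ℂ) + Jmat N -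
        (2 : ℂ) • C (m + 1) - Amat N α * B (m + 1) + (1 / 2 : ℂ) • (Amat N α * Amat N α)) *
          p (m + 1) +
      Polynomial.C (C (m + 1) * Amat N α - (2 : ℂ) • (C (m + 1) * B m)) * p m := by
  -- the identity `2 B(m) H(m) = A H(m) + H(m) A*`
  have hB : Amat N α * ip α (p m) (p m) + ip α (p m) (p m) * (Amat N α)ᴴ =
      (2 : ℂ) • (B m * ip α (p m) (p m)) := by
    have hD := ip_Dop α hα (p m) (p m)
    obtain ⟨h1, h2⟩ := ip_Dop_self hmon horth m
    have hX : ip α (Polynomial.X * p m) (p m) = B m * ip α (p m) (p m) := by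
      cases m with
      | zero => rw [hrec0, ip_add_left, ip_C_mul_left, horth 1 0 (by omega), zero_add]
      | succ m =>
        rw [hrecS, ip_add_left, ip_add_left, ip_C_mul_left, ip_C_mul_left,
          horth (m + 2) (m + 1) (by omega), horth m (m + 1) (by omega), mul_zero, add_zero,
          zero_add]
    rw [h1, h2, hX] at hD
    rw [hD, two_smul]
  -- coefficient relations
  have hDc := congrArg (fun q => q.coeff m) (Dop_poly hα hmon horth hpos hCH m)
  have hRc := congrArg (fun q => q.coeff (m + 1)) (hrecS m)
  simp only [coeff_Dop, Polynomial.coeff_add, Polynomial.coeff_C_mul, Polynomial.coeff_X_mul,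
    hmon.1, hmon.2 m (m + 1) (by omega), mul_one, one_mul, mul_zero, add_zero] at hDc hRc
  rw [← sub_eq_zero]
  refine eq_zero_of_orth hmon horth hpos (m + 1) _ (fun k hk => ?_) (fun k hk => ?_)
  · obtain ⟨k, rfl⟩ : ∃ l', k = l' + 1 := ⟨k - 1, by omega⟩
    rw [Polynomial.coeff_sub, coeff_Tmul_succ, Polynomial.coeff_add, Polynomial.coeff_add,
      Polynomial.coeff_C_mul, Polynomial.coeff_C_mul, Polynomial.coeff_C_mul,
      hmon.2 m (k + 1) (by omega)]
    rcases Nat.eq_or_lt_of_le (show m ≤ k by omega) with rfl | h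
    · rw [hmon.1]
      have e1 : (((m + 1 : ℕ) : ℂ) • (1 : Matrix (Fin N) (Fin N) ℂ)) =
          (m : Matrix (Fin N) (Fin N) ℂ) + 1 := by
        rw [Nat.cast_smul_eq_nsmul, nsmul_eq_mul, mul_one, Nat.cast_add, Nat.cast_one]
      have e2 : (m : Matrix (Fin N) (Fin N) ℂ) + 1 =
        Amat N α * (p (m + 1)).coeff m + (C (m + 1) + C (m + 1)) -
          (p (m + 1)).coeff m * Amat N α := by
        rw [← hDc]; abel
      rw [e1, e2, hRc, two_smul]
      noncomm_ring
    · rw [hmon.2 (m + 1) (k + 1) (by omega)]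
      rcases Nat.eq_or_lt_of_le (show m + 1 ≤ k by omega) with rfl | h'
      · rw [hmon.1, hmon.1]
        simp
      · rw [hmon.2 (m + 1) k (by omega), hmon.2 (m + 2) (k + 1) (by omega)]
        simp
  · rw [ip_sub_left, ip_add_left, ip_add_left, ip_C_mul_left, ip_C_mul_left, ip_C_mul_left,
      horth (m + 1) k (by omega), horth (m + 2) k (by omega), mul_zero, mul_zero, zero_add,
      zero_add, ip_Tmul α hα]
    rcases Nat.eq_or_lt_of_le (show k ≤ m by omega) with rfl | h
    · have h1 : ip α (p (k + 1)) (Tmul α (p k) - Polynomial.C (-(Amat N α)) * p (k + 1)) = 0 := by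
        refine orth_right hmon horth (k + 1) (k + 1) le_rfl _ fun l hl => ?_
        obtain ⟨l, rfl⟩ : ∃ l', l = l' + 1 := ⟨l - 1, by omega⟩
        rw [Polynomial.coeff_sub, coeff_Tmul_succ, Polynomial.coeff_C_mul,
          hmon.2 k (l + 1) (by omega)]
        rcases Nat.eq_or_lt_of_le (show k ≤ l by omega) with rfl | h
        · rw [hmon.1, hmon.1]
          simp
        · rw [hmon.2 k l h, hmon.2 (k + 1) (l + 1) (by omega)]
          simp
      rw [ip_sub_right, sub_eq_zero, ip_C_mul_right] at h1
      rw [h1, ← hCH k]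
      have e : (C (k + 1) * Amat N α - (2 : ℂ) • (C (k + 1) * B k)) * ip α (p k) (p k) =
          C (k + 1) * (Amat N α * ip α (p k) (p k) - (2 : ℂ) • (B k * ip α (p k) (p k))) := by
        rw [Matrix.sub_mul, Matrix.mul_sub, Matrix.smul_mul, Matrix.mul_smul, Matrix.mul_assoc,
          Matrix.mul_assoc]
      rw [e, ← hB, Matrix.conjTranspose_neg]
      noncomm_ring
    · have h1 : ip α (p (m + 1)) (Tmul α (p k)) = 0 := by
        refine orth_right hmon horth (m + 1) (m + 1) le_rfl _ fun l hl => ?_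
        obtain ⟨l, rfl⟩ : ∃ l', l = l' + 1 := ⟨l - 1, by omega⟩
        rw [coeff_Tmul_succ, hmon.2 k l (by omega), hmon.2 k (l + 1) (by omega)]
        simp
      rw [h1, horth m k (by omega)]
      simp

end

/-- **The Casimir operator as a difference operator** (Lemma 5.9 of the paper):
for the Hermite-type weight, the monic MVOPs satisfy
`P(x,n)(J − xA + ½A²) = −A P(x,n+1) + (nI + J − 2C(n) − AB(n) + ½A²)P(x,n)
 + (C(n)A − 2C(n)B(n−1))P(x,n−1)`. -/
theorem hermite_casimir_difference_relation
    (N : ℕ) (hN : 1 ≤ N) (α : Fin N → ℝ) (hα : ∀ j, 0 < α j)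
    (P : ℕ → ℝ → Matrix (Fin N) (Fin N) ℂ)
    (hPmonic : ∀ n, IsMonicMatPoly N n (P n))
    (hPorth : ∀ n m, n ≠ m → matIP N (hermW N α) (P n) (P m) = 0)
    (hHpos : ∀ n, (matIP N (hermW N α) (P n) (P n)).PosDef)
    (B C : ℕ → Matrix (Fin N) (Fin N) ℂ)
    (hrec : ∀ (n : ℕ) (x : ℝ),
      (x : ℂ) • P n x =
        P (n + 1) x + B n * P n x + C n * (if n = 0 then 0 else P (n - 1) x))
    (hC : ∀ n, 1 ≤ n →
      C n = matIP N (hermW N α) (P n) (P n) *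
        (matIP N (hermW N α) (P (n - 1)) (P (n - 1)))⁻¹) :
    ∀ (n : ℕ), 1 ≤ n → ∀ (x : ℝ),
      P n x * (Jmat N - (x : ℂ) • Amat N α + (1 / 2 : ℂ) • (Amat N α * Amat N α)) =
        -(Amat N α) * P (n + 1) x +
          ((n : ℂ) • (1 : Matrix (Fin N) (Fin N) ℂ) + Jmat N - (2 : ℂ) • C n -
              Amat N α * B n + (1 / 2 : ℂ) • (Amat N α * Amat N α)) * P n x +
          (C n * Amat N α - (2 : ℂ) • (C n * B (n - 1))) * P (n - 1) x := by
  choose c hc1 hc2 using hPmonic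
  let p : ℕ → Polynomial (Matrix (Fin N) (Fin N) ℂ) := fun n =>
    ∑ k ∈ Finset.range (n + 1), Polynomial.monomial k (c n k)
  have hcoeff : ∀ n k, (p n).coeff k = if k < n + 1 then c n k else 0 := by
    intro n k
    simp [p, Polynomial.finsetSum_coeff, Polynomial.coeff_monomial]
  have hev : ∀ n, ev (p n) = P n := by
    intro n
    funext x
    rw [hc2 n x]
    simp only [p, ev_sum, ev_monomial]
  have hmon : MonicSeq p := by
    refine ⟨fun n => ?_, fun n k hk => ?_⟩
    · rw [hcoeff, if_pos (by omega), hc1]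
    · rw [hcoeff, if_neg (by omega)]
  have horth : ∀ n m, n ≠ m → ip α (p n) (p m) = 0 := by
    intro n m h
    simp only [ip, hev]
    exact hPorth n m h
  have hpos : ∀ n, IsUnit (ip α (p n) (p n)) := by
    intro n
    simp only [ip, hev]
    exact (hHpos n).isUnit
  have hCH : ∀ n, C (n + 1) * ip α (p n) (p n) = ip α (p (n + 1)) (p (n + 1)) := by
    intro n
    have hu := hpos n
    rw [hC (n + 1) (by omega)]
    simp only [ip, hev, Nat.add_sub_cancel] at hu ⊢
    rw [Matrix.mul_assoc, Matrix.nonsing_inv_mul _ ((Matrix.isUnit_iff_isUnit_det _).1 hu),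
      Matrix.mul_one]
  have hrecS : ∀ n, Polynomial.X * p (n + 1) = p (n + 2) + Polynomial.C (B (n + 1)) * p (n + 1) +
      Polynomial.C (C (n + 1)) * p n := by
    intro n
    refine eq_of_ev hmon horth hpos fun x => ?_
    simp only [ev_X_mul, ev_add, ev_C_mul, hev]
    have := hrec (n + 1) x
    simpa using this
  have hrec0 : Polynomial.X * p 0 = p 1 + Polynomial.C (B 0) * p 0 := by
    refine eq_of_ev hmon horth hpos fun x => ?_
    simp only [ev_X_mul, ev_add, ev_C_mul, hev]
    have := hrec 0 x
    simpa using this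
  intro n hn x
  obtain ⟨m, rfl⟩ : ∃ m, n = m + 1 := ⟨n - 1, by omega⟩
  have key := congrArg (fun q => ev q x) (casimir_poly hα hmon horth hpos hCH hrecS hrec0 m)
  simp only [ev_Tmul, ev_add, ev_C_mul, hev] at key
  simpa [Tmat] using key
end

section
/- Let P(·,n) be the monic MVOPs of the Hermite-type weight W(x) = e^{−x²}L(x)L(x)*. Then for all n ≥ 0 and all indices 1 ≤ j,k ≤ N there exists a constant ξ(n,j,k) ∈ ℂ such that (P(x,n)L(x))_{jk} = ξ(n,j,k) H_{n+j−k}(x) for all x ∈ ℝ when n+j−k ≥ 0, and (P(x,n)L(x))_{jk} = 0 for all x ∈ ℝ when n+j−k < 0; i.e. the entries of Q(x,n) = P(x,n)L(x)e^{−x²/2} are scalar multiples of Hermite functions. -/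
open MeasureTheory Matrix Finset
open scoped ComplexOrder

open Polynomial in
/-- complex Hermite polynomials -/
noncomputable def hp : ℕ → ℂ[X]
  | 0 => 1
  | 1 => 2 * X
  | (m + 2) => 2 * X * hp (m + 1) - 2 * ((m : ℂ[X]) + 1) * hp m

namespace HQ

open Polynomial

lemma hp_eval (m : ℕ) (x : ℝ) : (hp m).eval (x : ℂ) = ((hermiteF m x : ℝ) : ℂ) := by
  induction m using Nat.strong_induction_on with
  | _ m ih =>
    match m with
    | 0 => simp [hp, hermiteF]
    | 1 => simp [hp, hermiteF]
    | m + 2 =>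
      have h1 := ih (m + 1) (by omega)
      have h2 := ih m (by omega)
      simp [hp, hermiteF, h1, h2]

lemma C2 : (C (2 : ℂ) : ℂ[X]) = 2 := map_ofNat C 2

lemma hp_rec (m : ℕ) :
    hp (m + 2) = 2 * X * hp (m + 1) - 2 * ((m : ℂ[X]) + 1) * hp m := by
  rw [hp]

lemma hp_deriv (m : ℕ) : derivative (hp (m + 1)) = 2 * ((m : ℂ[X]) + 1) * hp m := by
  induction m using Nat.strong_induction_on with
  | _ m ih =>
    match m with
    | 0 => simp [hp]
    | 1 =>
      simp [hp]
      ring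
    | m + 2 =>
      have h1 := ih (m + 1) (by omega)
      have h2 := ih m (by omega)
      have hr := hp_rec m
      rw [hp_rec (m + 1)]
      simp only [derivative_sub, derivative_mul, h1, h2, derivative_ofNat, derivative_X,
        derivative_add, derivative_natCast, derivative_one]
      push_cast
      linear_combination (-2 * ((m : ℂ[X]) + 2)) * hr

noncomputable def D (q : ℂ[X]) : ℂ[X] := derivative (derivative q) - 2 * X * derivative q

lemma hp_ode (m : ℕ) : D (hp m) = - 2 * (m : ℂ[X]) * hp m := by
  match m with
  | 0 => simp [hp, D]
  | 1 =>
    simp [hp, D]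
    ring
  | m + 2 =>
    have hr := hp_rec m
    have h1 := hp_deriv (m + 1)
    have h2 := hp_deriv m
    rw [D, h1]
    simp only [derivative_mul, derivative_add, derivative_natCast, derivative_one,
      derivative_ofNat, h2]
    push_cast
    linear_combination (2 * ((m : ℂ[X]) + 2)) * hr

lemma hp_coeff (m : ℕ) : (hp m).coeff m = 2 ^ m ∧ ∀ d, m < d → (hp m).coeff d = 0 := by
  induction m using Nat.strong_induction_on with
  | _ m ih =>
    match m with
    | 0 =>
      refine ⟨by simp [hp], fun d hd => ?_⟩
      simp [hp, coeff_one, hd.ne']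
    | 1 =>
      have : hp 1 = C 2 * X := by simp [hp, C2]
      refine ⟨by simp [this], fun d hd => ?_⟩
      rw [this, coeff_C_mul, coeff_X]
      simp [hd.ne]
    | m + 2 =>
      obtain ⟨h1, h1'⟩ := ih (m + 1) (by omega)
      obtain ⟨h2, h2'⟩ := ih m (by omega)
      have key : hp (m + 2) = C 2 * (X * hp (m + 1)) - C (2 * ((m : ℂ) + 1)) * hp m := by
        simp [hp, C2]
        ring
      constructor
      · rw [key, coeff_sub, coeff_C_mul, coeff_C_mul, coeff_X_mul, h1, h2' _ (by omega)]
        ring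
      · intro d hd
        obtain ⟨d, rfl⟩ : ∃ e, d = e + 1 := ⟨d - 1, by omega⟩
        rw [key, coeff_sub, coeff_C_mul, coeff_C_mul, coeff_X_mul, h1' _ (by omega),
          h2' _ (by omega)]
        ring

lemma coeff_D (q : ℂ[X]) (d : ℕ) :
    (D q).coeff d = ((d : ℂ) + 2) * (d + 1) * q.coeff (d + 2) - 2 * d * q.coeff d := by
  have h : D q = derivative (derivative q) - C 2 * (X * derivative q) := by
    simp [D, mul_assoc, C2]
  rw [h, coeff_sub, coeff_C_mul, coeff_derivative, coeff_derivative]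
  cases d with
  | zero => simp; ring
  | succ d =>
    rw [coeff_X_mul, coeff_derivative]
    push_cast
    ring

lemma D_mul (f g : ℂ[X]) :
    D (f * g) = D f * g + 2 * derivative f * derivative g + f * D g := by
  simp only [D, derivative_mul, derivative_add]
  ring

lemma D_add (f g : ℂ[X]) : D (f + g) = D f + D g := by
  simp only [D, derivative_add]
  ring

lemma D_C_mul (a : ℂ) (g : ℂ[X]) : D (C a * g) = C a * D g := by
  simp only [D, derivative_C_mul]
  ring

lemma D_sub (f g : ℂ[X]) : D (f - g) = D f - D g := by
  simp only [D, derivative_sub]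
  ring

lemma D_sum {ι : Type*} (s : Finset ι) (f : ι → ℂ[X]) :
    D (∑ i ∈ s, f i) = ∑ i ∈ s, D (f i) := by
  simp [D, derivative_sum, Finset.mul_sum]

lemma D_conj (q : ℂ[X]) :
    D (q.map (starRingEnd ℂ)) = (D q).map (starRingEnd ℂ) := by
  simp [D, derivative_map]

/-- polynomial solutions of the Hermite equation -/
lemma ode_zero (q : ℂ[X]) (e : ℤ) (h : D q = C (-2 * (e : ℂ)) * q)
    (h0 : ∀ d : ℕ, (d : ℤ) = e → q.coeff d = 0) : q = 0 := by
  by_contra hq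
  have hlc : q.coeff q.natDegree ≠ 0 := by
    simpa using hq
  have hc := congrArg (fun r => coeff r q.natDegree) h
  simp only [coeff_D, coeff_C_mul] at hc
  rw [coeff_eq_zero_of_natDegree_lt (show q.natDegree < q.natDegree + 2 by omega)] at hc
  have h3 : ((q.natDegree : ℂ) - e) * q.coeff q.natDegree = 0 := by linear_combination (-1/2) * hc
  rcases mul_eq_zero.1 h3 with h4 | h4
  · apply hlc
    apply h0
    have : (q.natDegree : ℂ) = e := by linear_combination h4
    exact_mod_cast this
  · exact hlc h4

lemma ode_hp (q : ℂ[X]) (e : ℕ) (h : D q = C (-2 * (e : ℂ)) * q) :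
    ∃ a : ℂ, q = C a * hp e := by
  refine ⟨q.coeff e / 2 ^ e, ?_⟩
  rw [← sub_eq_zero]
  apply ode_zero _ (e : ℤ)
  · rw [D_sub, D_C_mul, hp_ode, h]
    push_cast
    simp [C2]
    ring
  · intro d hd
    have : d = e := by exact_mod_cast hd
    subst this
    rw [coeff_sub, coeff_C_mul, (hp_coeff d).1]
    field_simp
    ring

/-! Gaussian functional -/

lemma integ (p : ℂ[X]) : Integrable (fun x : ℝ => p.eval (x : ℂ) * ((Real.exp (-x ^ 2) : ℝ) : ℂ)) := by
  induction p using Polynomial.induction_on' with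
  | add p q hp hq =>
    refine (hp.add hq).congr (Filter.Eventually.of_forall fun x => ?_)
    simp [add_mul]
  | monomial n a =>
    have h := (integrable_rpow_mul_exp_neg_mul_sq (b := 1) one_pos (s := n) (by
      have : (0 : ℝ) ≤ n := Nat.cast_nonneg n
      linarith)).ofReal (𝕜 := ℂ)
    have h2 := h.const_mul a
    refine h2.congr (Filter.Eventually.of_forall fun x => ?_)
    simp [mul_assoc]

noncomputable def I : ℂ[X] →ₗ[ℂ] ℂ where
  toFun p := ∫ x : ℝ, p.eval (x : ℂ) * ((Real.exp (-x ^ 2) : ℝ) : ℂ)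
  map_add' p q := by
    rw [← integral_add (integ p) (integ q)]
    simp [add_mul]
  map_smul' a p := by
    simp only [eval_smul, smul_eq_mul, mul_assoc, RingHom.id_apply]
    rw [integral_const_mul]

lemma I_parts (p : ℂ[X]) : I (derivative p - 2 * X * p) = 0 := by
  apply integral_eq_zero_of_hasDerivAt_of_integrable
    (f := fun x : ℝ => p.eval (x : ℂ) * ((Real.exp (-x ^ 2) : ℝ) : ℂ)) _ (integ _) (integ p)
  intro x
  have h1 : HasDerivAt (fun x : ℝ => p.eval (x : ℂ)) ((derivative p).eval (x : ℂ)) x :=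
    (p.hasDerivAt (x : ℂ)).comp_ofReal
  have h2 : HasDerivAt (fun x : ℝ => Real.exp (-x ^ 2)) (Real.exp (-x ^ 2) * (-(2 * x))) x := by
    have := ((hasDerivAt_pow 2 x).neg).exp
    simpa using this
  have h3 := h1.mul h2.ofReal_comp
  refine h3.congr_deriv ?_
  simp only [eval_sub, eval_mul, eval_ofNat, eval_X]
  push_cast
  ring

lemma I_symm (p r : ℂ[X]) : I (D p * r) = I (p * D r) := by
  have h1 := I_parts (derivative p * r)
  have h2 := I_parts (p * derivative r)
  rw [← sub_eq_zero, ← map_sub]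
  have h3 : D p * r - p * D r = (derivative (derivative p * r) - 2 * X * (derivative p * r))
      - (derivative (p * derivative r) - 2 * X * (p * derivative r)) := by
    simp only [D, derivative_mul]
    ring
  rw [h3, map_sub, h1, h2, sub_zero]

variable {N : ℕ}

abbrev MP (N : ℕ) := Matrix (Fin N) (Fin N) ℂ[X]

noncomputable def Lp (N : ℕ) (α : Fin N → ℝ) : MP N := Matrix.of fun j k =>
  if (k : ℕ) ≤ (j : ℕ) then
    C (((1 / Nat.factorial ((j : ℕ) - (k : ℕ)) * (α j / α k) : ℝ) : ℂ)) * hp ((j : ℕ) - (k : ℕ))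
  else 0

lemma Lp_eval (α : Fin N → ℝ) (x : ℝ) (j k : Fin N) :
    (Lp N α j k).eval (x : ℂ) = Lmat N α x j k := by
  simp only [Lp, Lmat, Matrix.of_apply]
  split_ifs
  · rw [eval_mul, eval_C, hp_eval]
    push_cast
    ring
  · simp

lemma Lp_D (α : Fin N → ℝ) (j k : Fin N) :
    D (Lp N α j k) = C (-2 * (((j : ℕ) : ℂ) - ((k : ℕ) : ℂ))) * Lp N α j k := by
  simp only [Lp, Matrix.of_apply]
  split_ifs with h
  · rw [D_C_mul, hp_ode]
    rw [Nat.cast_sub h]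
    simp [C2]
    ring
  · simp [D]

lemma Lp_deriv (α : Fin N → ℝ) (hα : ∀ j, 0 < α j) (j k : Fin N) :
    derivative (Lp N α j k) = ∑ l, C (Amat N α j l) * Lp N α l k := by
  by_cases h0 : (j : ℕ) = 0
  · rw [Finset.sum_eq_zero]
    · simp only [Lp, Matrix.of_apply]
      split_ifs with h
      · simp [h0, hp]
      · simp
    · intro l _
      simp [Amat, h0]
  · have hj := j.2
    rw [Finset.sum_eq_single (⟨(j : ℕ) - 1, by omega⟩ : Fin N)]
    · have hA : (j : ℕ) = (j : ℕ) - 1 + 1 := by omega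
      simp only [Lp, Matrix.of_apply, Amat]
      rw [if_pos hA]
      by_cases h : (k : ℕ) ≤ (j : ℕ) - 1
      · rw [if_pos h, if_pos (by omega)]
        obtain ⟨m, hm⟩ : ∃ m, (j : ℕ) - 1 - k = m := ⟨_, rfl⟩
        have hm' : (j : ℕ) - k = m + 1 := by omega
        rw [hm, hm', derivative_C_mul, hp_deriv]
        have e : (2 * ((m : ℂ[X]) + 1)) = C (2 * ((m : ℂ) + 1)) := by simp [C2]
        rw [e, ← mul_assoc, ← mul_assoc, ← C_mul, ← C_mul]
        congr 2
        have h1 := (hα j).ne'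
        have h2 := (hα k).ne'
        have h3 := (hα ⟨(j : ℕ) - 1, by omega⟩).ne'
        have h4 : ((m.factorial : ℕ) : ℝ) ≠ 0 := by positivity
        have h5 : (m : ℝ) + 1 ≠ 0 := by positivity
        rw [show (2 * ((m : ℂ) + 1)) = ((2 * ((m : ℝ) + 1) : ℝ) : ℂ) by push_cast; ring,
          ← Complex.ofReal_mul, ← Complex.ofReal_mul, Nat.factorial_succ]
        congr 1
        push_cast
        field_simp
      · rw [if_neg h]
        split_ifs with h'
        · have : (j : ℕ) - k = 0 := by omega
          simp [this, hp]
        · simp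
    · intro l _ hl
      have : ¬ ((j : ℕ) = l + 1) := by
        intro h
        apply hl
        ext
        simp [h]
      simp [Amat, this]
    · simp

/-- degree less than `n` -/
def dl (n : ℕ) (M : MP N) : Prop := ∀ i j, ∀ d, n ≤ d → (M i j).coeff d = 0

/-- the operator on the right acting on `p` in `p L` -/
noncomputable def R (α : Fin N → ℝ) (M : MP N) : MP N := Matrix.of fun j l =>
  D (M j l) + C 2 * ∑ i, derivative (M j i) * C (Amat N α i l) - C (2 * ((l : ℕ) : ℂ)) * M j l

lemma R_mul_L (α : Fin N → ℝ) (hα : ∀ j, 0 < α j) (M : MP N) (j k : Fin N) :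
    (R α M * Lp N α) j k = D ((M * Lp N α) j k) - C (2 * ((k : ℕ) : ℂ)) * (M * Lp N α) j k := by
  simp only [Matrix.mul_apply, D_sum, D_mul, R, Matrix.of_apply, Lp_D]
  have e : ∑ i, 2 * derivative (M j i) * derivative (Lp N α i k)
      = ∑ l, (C 2 * ∑ i, derivative (M j i) * C (Amat N α i l)) * Lp N α l k := by
    simp only [Lp_deriv α hα, Finset.mul_sum, Finset.sum_mul]
    rw [Finset.sum_comm]
    refine Finset.sum_congr rfl fun l _ => Finset.sum_congr rfl fun i _ => ?_
    simp only [map_ofNat]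
    ring
  rw [Finset.sum_add_distrib, Finset.sum_add_distrib, e, Finset.mul_sum,
    ← Finset.sum_add_distrib, ← Finset.sum_add_distrib, ← Finset.sum_sub_distrib]
  refine Finset.sum_congr rfl fun l _ => ?_
  simp only [C_mul, C_sub, C_neg]
  ring

lemma R_coeff (α : Fin N → ℝ) (M : MP N) (n : ℕ) (hM : dl (n + 1) M) (j l : Fin N) (d : ℕ)
    (hd : n ≤ d) :
    (R α M j l).coeff d = - 2 * ((d : ℂ) + (l : ℕ)) * (M j l).coeff d := by
  simp only [R, Matrix.of_apply, coeff_sub, coeff_add, coeff_D, coeff_C_mul, finsetSum_coeff,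
    coeff_mul_C, coeff_derivative]
  rw [hM j l (d + 2) (by omega), Finset.sum_eq_zero]
  · ring
  · intro i _
    rw [hM j i (d + 1) (by omega)]
    ring

lemma R_dl (α : Fin N → ℝ) (M : MP N) (n : ℕ) (hM : dl (n + 1) M) : dl (n + 1) (R α M) := by
  intro i j d hd
  rw [R_coeff α M n hM i j d (by omega), hM i j d hd, mul_zero]

/-- the bilinear form -/
noncomputable def B (α : Fin N → ℝ) (M G : MP N) : Matrix (Fin N) (Fin N) ℂ :=
  Matrix.of fun i j => I (∑ k, (M * Lp N α) i k * ((G * Lp N α) j k).map (starRingEnd ℂ))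

lemma B_R (α : Fin N → ℝ) (hα : ∀ j, 0 < α j) (M G : MP N) : B α (R α M) G = B α M (R α G) := by
  ext i j
  simp only [B, Matrix.of_apply, map_sum]
  refine Finset.sum_congr rfl fun k _ => ?_
  rw [R_mul_L α hα, R_mul_L α hα]
  simp only [Polynomial.map_sub, Polynomial.map_mul, ← D_conj, map_C]
  rw [sub_mul, mul_sub, map_sub, map_sub, I_symm]
  congr 2
  simp only [map_mul, map_natCast, C2, Complex.conj_ofNat]
  ring

lemma B_sub (α : Fin N → ℝ) (M M' G : MP N) : B α (M - M') G = B α M G - B α M' G := by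
  ext i j
  simp only [B, Matrix.of_apply, Matrix.sub_apply, sub_mul, Finset.sum_sub_distrib, map_sub]

noncomputable def cm (c : Matrix (Fin N) (Fin N) ℂ) : MP N := c.map C

lemma B_left {ι : Type*} (α : Fin N → ℝ) (s : Finset ι) (c : ι → Matrix (Fin N) (Fin N) ℂ)
    (M : ι → MP N) (G : MP N) :
    B α (∑ i ∈ s, cm (c i) * M i) G = ∑ i ∈ s, c i * B α (M i) G := by
  classical
  induction s using Finset.induction_on with
  | empty => ext i j; simp [B]
  | insert a s ha ih =>
    rw [Finset.sum_insert ha, Finset.sum_insert ha, ← ih]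
    have hcm : ∀ (K : MP N) (i k : Fin N), (cm (c a) * K) i k = ∑ l, C (c a i l) * K l k :=
      fun K i k => by simp [Matrix.mul_apply, cm]
    ext i j
    simp only [B, Matrix.of_apply, Matrix.add_apply, add_mul, Finset.sum_add_distrib, map_add]
    congr 1
    simp only [Matrix.mul_apply (M := c a), Matrix.of_apply, Matrix.mul_assoc]
    simp only [hcm, Finset.sum_mul, map_sum,
      Finset.mul_sum]
    rw [Finset.sum_comm]
    refine Finset.sum_congr rfl fun l _ => Finset.sum_congr rfl fun k _ => ?_
    rw [mul_assoc, ← smul_eq_C_mul, map_smul, smul_eq_mul]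

lemma B_right {ι : Type*} (α : Fin N → ℝ) (s : Finset ι) (c : ι → Matrix (Fin N) (Fin N) ℂ)
    (M : ι → MP N) (G : MP N) :
    B α G (∑ i ∈ s, cm (c i) * M i) = ∑ i ∈ s, B α G (M i) * (c i)ᴴ := by
  classical
  induction s using Finset.induction_on with
  | empty => ext i j; simp [B]
  | insert a s ha ih =>
    rw [Finset.sum_insert ha, Finset.sum_insert ha, ← ih]
    have hcm : ∀ (K : MP N) (i k : Fin N), (cm (c a) * K) i k = ∑ l, C (c a i l) * K l k :=
      fun K i k => by simp [Matrix.mul_apply, cm]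
    ext i j
    simp only [B, Matrix.of_apply, Matrix.add_apply, add_mul, Finset.sum_add_distrib, map_add,
      Polynomial.map_add, mul_add]
    congr 1
    simp only [Matrix.mul_apply (N := (c a)ᴴ), Matrix.of_apply, Matrix.mul_assoc]
    simp only [hcm, Finset.sum_mul, map_sum,
      Finset.mul_sum, Polynomial.map_sum, Polynomial.map_mul, map_C]
    rw [Finset.sum_comm]
    refine Finset.sum_congr rfl fun l _ => Finset.sum_congr rfl fun k _ => ?_
    rw [mul_left_comm, ← smul_eq_C_mul, map_smul, smul_eq_mul, mul_comm]
    simp [Matrix.conjTranspose_apply]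

lemma eval_conj (q : ℂ[X]) (x : ℝ) :
    (q.map (starRingEnd ℂ)).eval (x : ℂ) = star (q.eval (x : ℂ)) := by
  have := Polynomial.eval_map_apply (f := starRingEnd ℂ) (p := q) (x : ℂ)
  simpa using this

lemma B_eq (α : Fin N → ℝ) (M G : MP N) (F H : ℝ → Matrix (Fin N) (Fin N) ℂ)
    (hF : ∀ x i j, F x i j = (M i j).eval (x : ℂ)) (hH : ∀ x i j, H x i j = (G i j).eval (x : ℂ)) :
    matIP N (hermW N α) F H = B α M G := by
  have aux : ∀ (M : MP N) (F : ℝ → Matrix (Fin N) (Fin N) ℂ)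
      (_ : ∀ x i j, F x i j = (M i j).eval (x : ℂ)) (x : ℝ) (i k : Fin N),
      ((M * Lp N α) i k).eval (x : ℂ) = (F x * Lmat N α x) i k := by
    intro M F hF x i k
    simp [Matrix.mul_apply, eval_finsetSum, hF, Lp_eval]
  ext i j
  simp only [matIP, matInt, B, Matrix.of_apply, I, LinearMap.coe_mk, AddHom.coe_mk]
  congr 1
  ext x
  have e : F x * hermW N α x * (H x)ᴴ
      = Real.exp (-x ^ 2) • ((F x * Lmat N α x) * (H x * Lmat N α x)ᴴ) := by
    rw [hermW, Matrix.conjTranspose_mul]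
    simp only [Matrix.mul_smul, Matrix.smul_mul, Matrix.mul_assoc]
  rw [e, Matrix.smul_apply, Matrix.mul_apply, eval_finsetSum, Complex.real_smul, mul_comm]
  congr 1
  refine Finset.sum_congr rfl fun k _ => ?_
  rw [eval_mul, eval_conj, aux M F hF, aux G H hH, Matrix.conjTranspose_apply]

lemma expand (p : ℕ → MP N) (hp1 : ∀ n, dl (n + 1) (p n))
    (hp2 : ∀ n i j, (p n i j).coeff n = (1 : Matrix (Fin N) (Fin N) ℂ) i j)
    (n : ℕ) : ∀ (M : MP N), dl n M → ∃ c : ℕ → Matrix (Fin N) (Fin N) ℂ,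
      M = ∑ i ∈ Finset.range n, cm (c i) * p i := by
  induction n with
  | zero =>
    intro M hM
    refine ⟨0, ?_⟩
    ext i j d
    simpa using hM i j d (Nat.zero_le _)
  | succ n ih =>
    intro M hM
    let c0 : Matrix (Fin N) (Fin N) ℂ := Matrix.of fun i j => (M i j).coeff n
    have hcf : ∀ i j d, ((cm c0 * p n) i j).coeff d = ∑ k, c0 i k * (p n k j).coeff d := by
      intro i j d
      simp [Matrix.mul_apply, cm, finsetSum_coeff, coeff_C_mul]
    have h1 : dl n (M - cm c0 * p n) := by
      intro i j d hd
      rw [Matrix.sub_apply, coeff_sub, hcf]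
      rcases hd.eq_or_lt with rfl | hd
      · simp only [hp2]
        rw [← Matrix.mul_apply, mul_one]
        simp [c0]
      · rw [hM i j d hd, Finset.sum_eq_zero, sub_zero]
        intro k _
        rw [hp1 n k j d hd, mul_zero]
    obtain ⟨c, hc⟩ := ih _ h1
    refine ⟨fun i => if i = n then c0 else c i, ?_⟩
    rw [Finset.sum_range_succ]
    simp only [if_true]
    rw [eq_comm, ← eq_sub_iff_add_eq, hc]
    refine Finset.sum_congr rfl fun i hi => ?_
    rw [if_neg (Finset.mem_range.1 hi).ne]

end HQ

/-- **Entries of `P(x,n)L(x)` are multiples of Hermite polynomials**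
(Proposition 5.13 of the paper): for the Hermite-type weight,
`(P(x,n)L(x))_{jk} = ξ(n,j,k) H_{n+j−k}(x)` if `n+j−k ≥ 0`, and `0` otherwise;
equivalently the entries of `Q(x,n) = P(x,n)L(x)e^{−x²/2}` are scalar multiples
of Hermite functions. -/
theorem hermite_Q_entries
    (N : ℕ) (hN : 1 ≤ N) (α : Fin N → ℝ) (hα : ∀ j, 0 < α j)
    (P : ℕ → ℝ → Matrix (Fin N) (Fin N) ℂ)
    (hPmonic : ∀ n, IsMonicMatPoly N n (P n))
    (hPorth : ∀ n m, n ≠ m → matIP N (hermW N α) (P n) (P m) = 0)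
    (hHpos : ∀ n, (matIP N (hermW N α) (P n) (P n)).PosDef)
    :
    ∀ (n : ℕ) (j k : Fin N),
      (if (k : ℕ) ≤ n + (j : ℕ) then
        ∃ ξ : ℂ, ∀ x : ℝ,
          (P n x * Lmat N α x) j k =
            ξ * ((hermiteF (n + (j : ℕ) - (k : ℕ)) x : ℝ) : ℂ)
      else
        ∀ x : ℝ, (P n x * Lmat N α x) j k = 0) := by
  classical
  choose c hc1 hc2 using hPmonic
  let p : ℕ → HQ.MP N := fun n => Matrix.of fun i j =>
    ∑ k ∈ Finset.range (n + 1), Polynomial.monomial k (c n k i j)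
  have hpe : ∀ n x i j, P n x i j = (p n i j).eval (x : ℂ) := by
    intro n x i j
    rw [hc2]
    simp only [p, Matrix.of_apply, Polynomial.eval_finsetSum, Polynomial.eval_monomial,
      Matrix.sum_apply, Matrix.smul_apply, smul_eq_mul]
    exact Finset.sum_congr rfl fun k _ => mul_comm _ _
  have hpc : ∀ n i j d, (p n i j).coeff d = if d < n + 1 then c n d i j else 0 := by
    intro n i j d
    simp only [p, Matrix.of_apply, Polynomial.finsetSum_coeff, Polynomial.coeff_monomial]
    rw [Finset.sum_ite_eq']
    simp
  have hp1 : ∀ n, HQ.dl (n + 1) (p n) := by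
    intro n i j d hd
    rw [hpc, if_neg (by omega)]
  have hp2 : ∀ n i j, (p n i j).coeff n = (1 : Matrix (Fin N) (Fin N) ℂ) i j := by
    intro n i j
    rw [hpc, if_pos (by omega), hc1]
  have hB : ∀ n m, matIP N (hermW N α) (P n) (P m) = HQ.B α (p n) (p m) := fun n m =>
    HQ.B_eq α _ _ _ _ (hpe n) (hpe m)
  have horth : ∀ n m, n ≠ m → HQ.B α (p n) (p m) = 0 := fun n m h => by rw [← hB, hPorth n m h]
  -- the eigenvalue equation
  have heig : ∀ n, HQ.R α (p n) =
      HQ.cm (Matrix.diagonal fun j : Fin N => -2 * ((n : ℂ) + (j : ℕ))) * p n := by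
    intro n
    set Λ : Matrix (Fin N) (Fin N) ℂ := Matrix.diagonal fun j : Fin N => -2 * ((n : ℂ) + (j : ℕ))
      with hΛ
    have hΛe : ∀ i j, (HQ.cm Λ * p n) i j = Polynomial.C (-2 * ((n : ℂ) + (i : ℕ))) * p n i j := by
      intro i j
      rw [HQ.cm, hΛ, Matrix.diagonal_map (by simp), Matrix.diagonal_mul]
    rw [← sub_eq_zero]
    have hdl : HQ.dl n (HQ.R α (p n) - HQ.cm Λ * p n) := by
      intro i j d hd
      rw [Matrix.sub_apply, Polynomial.coeff_sub, hΛe, Polynomial.coeff_C_mul,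
        HQ.R_coeff α _ n (hp1 n) i j d hd]
      rcases hd.eq_or_lt with rfl | hd
      · rw [hp2, Matrix.one_apply]
        split_ifs with h
        · rw [h]; ring
        · ring
      · rw [hp1 n i j d hd]; ring
    have h0 : ∀ m, m < n → HQ.B α (HQ.R α (p n) - HQ.cm Λ * p n) (p m) = 0 := by
      intro m hm
      rw [HQ.B_sub, HQ.B_R α hα]
      obtain ⟨c', hc'⟩ := HQ.expand p hp1 hp2 (m + 1) _ (HQ.R_dl α _ m (hp1 m))
      have h2 := HQ.B_left α {()} (fun _ => Λ) (fun _ => p n) (p m)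
      simp only [Finset.sum_singleton] at h2
      rw [h2, hc', HQ.B_right, horth n m (by omega), mul_zero, sub_zero]
      apply Finset.sum_eq_zero
      intro i hi
      have := Finset.mem_range.1 hi
      rw [horth n i (by omega), zero_mul]
    obtain ⟨c', hc'⟩ := HQ.expand p hp1 hp2 n _ hdl
    rw [hc']
    apply Finset.sum_eq_zero
    intro m hm
    have h3 := h0 m (Finset.mem_range.1 hm)
    rw [hc', HQ.B_left, Finset.sum_eq_single m] at h3
    · have hu : IsUnit (HQ.B α (p m) (p m)) := by
        rw [← hB]
        exact (hHpos m).isUnit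
      have : c' m = 0 := by
        rw [← zero_mul (HQ.B α (p m) (p m))] at h3
        exact hu.mul_right_cancel h3
      rw [this]
      simp [HQ.cm]
    · intro i _ hi
      rw [horth i m hi, mul_zero]
    · intro h
      exact absurd hm h
  intro n j k
  have hode : HQ.D ((p n * HQ.Lp N α) j k) =
      Polynomial.C (-2 * (((n : ℤ) + (j : ℕ) - (k : ℕ) : ℤ) : ℂ)) * (p n * HQ.Lp N α) j k := by
    have h := HQ.R_mul_L α hα (p n) j k
    rw [heig, Matrix.mul_assoc, HQ.cm, Matrix.diagonal_map (by simp), Matrix.diagonal_mul] at h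
    rw [eq_sub_iff_add_eq] at h
    rw [← h, ← add_mul, ← Polynomial.C_add]
    congr 2
    push_cast
    ring
  have hev : ∀ x : ℝ, (P n x * Lmat N α x) j k = ((p n * HQ.Lp N α) j k).eval (x : ℂ) := by
    intro x
    simp [Matrix.mul_apply, Polynomial.eval_finsetSum, hpe, HQ.Lp_eval]
  split_ifs with hk
  · obtain ⟨a, ha⟩ := HQ.ode_hp _ (n + j - k) (by
      rw [hode, Nat.cast_sub hk]
      push_cast
      rfl)
    refine ⟨a, fun x => ?_⟩
    rw [hev, ha, Polynomial.eval_mul, Polynomial.eval_C, HQ.hp_eval]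
  · intro x
    rw [hev, HQ.ode_zero _ _ hode, Polynomial.eval_zero]
    intro d hd
    omega
end

section
/- Let P(·,n) be the monic MVOPs of the Hermite-type weight W(x) = e^{−x²}L(x)L(x)*. Then for all n ≥ 0 and all 1 ≤ k ≤ N, the last row of P(x,n)L(x) is given explicitly by (P(x,n)L(x))_{N,k} = (2^{−n}/(N−k)!)·(α_N/α_k)·H_{n+N−k}(x) for all x ∈ ℝ; i.e. the coefficients ξ(n,N,k) in the Hermite-function expansion of the entries equal 2^{−n} α_N / ((N−k)! α_k). -/
open MeasureTheory Matrix Finset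
open scoped ComplexOrder

namespace HLR
open Polynomial

/-- Hermite polynomials as complex polynomials. -/
noncomputable def K : ℕ → ℂ[X]
  | 0 => 1
  | (m + 1) => C 2 * X * K m - derivative (K m)

lemma K_deriv (m : ℕ) : derivative (K (m+1)) = C (2 * ((m:ℂ)+1)) * K m := by
  induction m with
  | zero => simp [K]
  | succ m ih =>
    have h : K (m+2) = C 2 * X * K (m+1) - derivative (K (m+1)) := rfl
    rw [h, ih]
    have h1 : K (m+1) = C 2 * X * K m - derivative (K m) := rfl
    simp only [derivative_sub, derivative_mul, derivative_C, derivative_X, ih]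
    push_cast
    simp only [map_mul, map_add, map_one]
    linear_combination (- C 2 * (C (m:ℂ) + 1) : ℂ[X]) * h1

lemma K_rec (m : ℕ) : K (m+2) = C 2 * X * K (m+1) - C (2 * ((m:ℂ)+1)) * K m := by
  rw [← K_deriv]; rfl

lemma K_eval (m : ℕ) (x : ℝ) : (K m).eval (x:ℂ) = (hermiteF m x : ℂ) := by
  induction m using Nat.strong_induction_on with
  | _ m ih =>
    match m with
    | 0 => simp [K, hermiteF]
    | 1 => simp [K, hermiteF]
    | m + 2 =>
      rw [K_rec, hermiteF]
      simp [ih m (by omega), ih (m+1) (by omega)]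

lemma CX_deg : (C 2 * X : ℂ[X]).natDegree ≤ 1 := by
  simp

lemma K_deg (m : ℕ) : (K m).natDegree ≤ m := by
  induction m with
  | zero => simp [K]
  | succ m ih =>
    rw [K]
    refine (natDegree_sub_le _ _).trans (max_le ?_ ?_)
    · refine natDegree_mul_le.trans ?_
      have := CX_deg
      omega
    · have := natDegree_derivative_le (K m)
      omega

lemma integrable_poly (p : ℂ[X]) :
    Integrable (fun y : ℝ => (Real.exp (-y^2) : ℂ) * p.eval (y:ℂ)) := by
  induction p using Polynomial.induction_on' with
  | add p q hp hq => 
    refine (hp.add hq).congr (Filter.Eventually.of_forall fun y => ?_)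
    simp [mul_add]
  | monomial n a =>
    have h := integrable_rpow_mul_exp_neg_mul_sq (b := 1) one_pos (s := (n:ℝ)) (by
      have : (0:ℝ) ≤ n := n.cast_nonneg
      linarith)
    have h2 := (h.ofReal (𝕜 := ℂ)).mul_const a
    refine h2.congr (Filter.Eventually.of_forall fun y => ?_)
    simp [Real.rpow_natCast]
    ring

/-- Gaussian integral of a polynomial. -/
noncomputable def I : ℂ[X] →ₗ[ℂ] ℂ where
  toFun p := ∫ y : ℝ, (Real.exp (-y^2) : ℂ) * p.eval (y:ℂ)
  map_add' p q := by
    simp only [eval_add, mul_add]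
    exact integral_add (integrable_poly p) (integrable_poly q)
  map_smul' a p := by
    simp only [eval_smul, smul_eq_mul, RingHom.id_apply]
    rw [← integral_const_mul]
    congr 1; ext y; ring

lemma I_apply (p : ℂ[X]) : I p = ∫ y : ℝ, (Real.exp (-y^2) : ℂ) * p.eval (y:ℂ) := rfl

lemma I_C_mul (a : ℂ) (p : ℂ[X]) : I (C a * p) = a * I p := by
  rw [← smul_eq_C_mul, map_smul, smul_eq_mul]

lemma I_parts (g : ℂ[X]) : I (derivative g - C 2 * X * g) = 0 := by
  rw [I_apply]
  refine integral_eq_zero_of_hasDerivAt_of_integrable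
    (f := fun y : ℝ => (Real.exp (-y^2) : ℂ) * g.eval (y:ℂ)) ?_ (integrable_poly _)
    (integrable_poly _)
  intro y
  have h1 : HasDerivAt (fun y : ℝ => Real.exp (-y^2)) (Real.exp (-y^2) * (-(2*y))) y := by
    have := ((hasDerivAt_pow 2 y).neg).exp
    simpa using this
  have h2 : HasDerivAt (fun y : ℝ => g.eval (y:ℂ)) ((derivative g).eval (y:ℂ)) y :=
    (g.hasDerivAt (y:ℂ)).comp_ofReal
  have h3 := h1.ofReal_comp.mul h2
  refine h3.congr_deriv ?_
  simp
  ring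

lemma I_K (M : ℕ) (f : ℂ[X]) (hf : f.degree < M) : I (K M * f) = 0 := by
  induction M generalizing f with
  | zero =>
    have : f = 0 := by simpa using hf
    simp [this]
  | succ M ih =>
    have h := I_parts (K M * f)
    have h2 : I (K M * derivative f) = 0 := by
      apply ih
      by_cases h0 : f = 0
      · simp [h0]
      · have := degree_derivative_lt h0
        refine this.trans_le ?_
        rw [degree_eq_natDegree h0] at hf ⊢
        have h6 : f.natDegree < M + 1 := by exact_mod_cast hf
        exact_mod_cast Nat.lt_succ_iff.mp h6
    have e : derivative (K M * f) - C 2 * X * (K M * f) = K M * derivative f - K (M+1) * f := by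
      rw [derivative_mul, K]; ring
    rw [e, map_sub, h2] at h
    simpa using h

/-- conjugate -/
noncomputable def cj : ℂ[X] →+* ℂ[X] := mapRingHom (starRingEnd ℂ)

lemma cj_eval (p : ℂ[X]) (y : ℝ) : (cj p).eval (y:ℂ) = (starRingEnd ℂ) (p.eval (y:ℂ)) := by
  rw [cj, coe_mapRingHom, ← eval_map_apply]
  simp

lemma cj_C (a : ℂ) : cj (C a) = C ((starRingEnd ℂ) a) := by simp [cj]

/-- generating series -/
noncomputable def R (n : ℕ) : PowerSeries ℂ[X] :=
  PowerSeries.mk fun p => C ((p.factorial : ℂ)⁻¹) * K (n + p)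

noncomputable def Q : ℕ → PowerSeries ℂ[X]
  | 0 => 1
  | 1 => PowerSeries.C (C 2 * X) - PowerSeries.C (C 2) * PowerSeries.X
  | (n+2) => (PowerSeries.C (C 2 * X) - PowerSeries.C (C 2) * PowerSeries.X) * Q (n+1)
      - PowerSeries.C (C (2 * ((n:ℂ)+1))) * Q n

lemma R_one : R 1 = (PowerSeries.C (C 2 * X) - PowerSeries.C (C 2) * PowerSeries.X) * R 0 := by
  ext1 p
  rw [sub_mul, map_sub, mul_assoc, PowerSeries.coeff_C_mul, PowerSeries.coeff_C_mul]
  cases p with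
  | zero => simp [R, K]
  | succ p =>
    rw [PowerSeries.coeff_succ_X_mul]
    simp only [R, PowerSeries.coeff_mk]
    rw [show 1 + (p+1) = p + 2 by ring, K_rec, zero_add, zero_add]
    have : (C (((p+1).factorial : ℂ)⁻¹) * C (2 * ((p:ℂ)+1)) : ℂ[X]) = C 2 * C ((p.factorial:ℂ)⁻¹) := by
      rw [← C_mul, ← C_mul]
      congr 1
      have : (p.factorial:ℂ) ≠ 0 := by exact_mod_cast p.factorial_ne_zero
      have h2 : (p:ℂ)+1 ≠ 0 := by exact_mod_cast p.succ_ne_zero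
      rw [Nat.factorial_succ]; push_cast
      field_simp
    linear_combination (-K p) * this

lemma R_rec (n : ℕ) : R (n+2) =
    (PowerSeries.C (C 2 * X) - PowerSeries.C (C 2) * PowerSeries.X) * R (n+1)
      - PowerSeries.C (C (2 * ((n:ℂ)+1))) * R n := by
  ext1 p
  rw [sub_mul, map_sub, map_sub, mul_assoc, PowerSeries.coeff_C_mul, PowerSeries.coeff_C_mul,
    PowerSeries.coeff_C_mul]
  cases p with
  | zero => simp [R, K_rec]
  | succ p =>
    rw [PowerSeries.coeff_succ_X_mul]
    simp only [R, PowerSeries.coeff_mk]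
    rw [show n + 2 + (p+1) = (n + p + 1) + 2 by ring, K_rec, show n + 1 + (p+1) = n+p+1+1 by ring,
      show n + 1 + p = n+p+1 by ring, show n + (p+1) = n+p+1 by ring]
    have : (C (((p+1).factorial : ℂ)⁻¹) * C (2 * (((n+p+1:ℕ):ℂ)+1)) : ℂ[X]) = C 2 * C ((p.factorial:ℂ)⁻¹) 
       + C (2 * ((n:ℂ)+1)) * C (((p+1).factorial : ℂ)⁻¹) := by
      rw [← C_mul, ← C_mul, ← C_mul, ← C_add]
      congr 1
      have : (p.factorial:ℂ) ≠ 0 := by exact_mod_cast p.factorial_ne_zero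
      have h2 : (p:ℂ)+1 ≠ 0 := by exact_mod_cast p.succ_ne_zero
      rw [Nat.factorial_succ]; push_cast
      field_simp
      ring
    linear_combination (-K (n+p+1)) * this

lemma Q_mul_R (n : ℕ) : Q n * R 0 = R n := by
  induction n using Nat.strong_induction_on with
  | _ n ih =>
    match n with
    | 0 => simp [Q]
    | 1 => rw [R_one, Q]
    | n+2 => rw [R_rec, Q, ← ih n (by omega), ← ih (n+1) (by omega)]; ring

lemma Q_deg (n m : ℕ) : ((Q n).coeff m).natDegree ≤ n ∧
    ((Q n).coeff m).coeff n = if m = 0 then (2:ℂ)^n else 0 := by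
  induction n using Nat.strong_induction_on generalizing m with
  | _ n ih =>
    match n with
    | 0 => 
      rw [Q, PowerSeries.coeff_one]
      split_ifs <;> simp
    | 1 =>
      rw [Q, map_sub, PowerSeries.coeff_C_mul, PowerSeries.coeff_C, PowerSeries.coeff_X]
      match m with
      | 0 => simp
      | 1 => simp
      | m+2 => simp
    | n+2 => 
      rw [Q, sub_mul, map_sub, map_sub, mul_assoc, PowerSeries.coeff_C_mul, PowerSeries.coeff_C_mul,
        PowerSeries.coeff_C_mul]
      obtain ⟨a1, a2⟩ := ih (n+1) (by omega) m
      obtain ⟨b1, b2⟩ := ih n (by omega) m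
      have c1 : ((PowerSeries.X * Q (n+1)).coeff m).natDegree ≤ n+1 := by
        cases m with
        | zero => simp
        | succ m => 
          rw [PowerSeries.coeff_succ_X_mul]
          exact (ih (n+1) (by omega) m).1
      constructor
      · refine (natDegree_sub_le _ _).trans (max_le ((natDegree_sub_le _ _).trans (max_le ?_ ?_)) ?_)
        · refine natDegree_mul_le.trans ?_
          have := CX_deg
          omega
        · exact (natDegree_C_mul_le _ _).trans (by omega)
        · exact (natDegree_C_mul_le _ _).trans (by omega)
      · rw [coeff_sub, coeff_sub, coeff_C_mul, coeff_C_mul, mul_assoc, coeff_C_mul,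
          coeff_X_mul, a2, coeff_eq_zero_of_natDegree_lt (show _ < n+2 by omega),
          coeff_eq_zero_of_natDegree_lt (show _ < n+2 by omega)]
        split_ifs <;> ring

variable {N : ℕ}

/-- polynomial version of `Lmat` -/
noncomputable def LP (α : Fin N → ℝ) (j k : Fin N) : ℂ[X] :=
  if (k:ℕ) ≤ j then
    C ((α j / α k : ℝ) : ℂ) * (C (((((j:ℕ)-k).factorial : ℕ) : ℂ)⁻¹) * K ((j:ℕ)-k)) else 0

lemma LP_eval (α : Fin N → ℝ) (j k : Fin N) (x : ℝ) :
    (LP α j k).eval (x:ℂ) = Lmat N α x j k := by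
  unfold LP Lmat
  simp only [Matrix.of_apply]
  split_ifs
  · simp [K_eval]; ring
  · simp

lemma LP_deg (α : Fin N → ℝ) (j k : Fin N) : (LP α j k).natDegree ≤ N - 1 - k := by
  unfold LP
  split_ifs
  · refine (natDegree_C_mul_le _ _).trans ((natDegree_C_mul_le _ _).trans ((K_deg _).trans ?_))
    omega
  · simp

/-- `v ↦ v L` -/
noncomputable def rm (α : Fin N → ℝ) (v : Fin N → ℂ[X]) (k : Fin N) : ℂ[X] := ∑ j, v j * LP α j k

lemma rm_sub (α : Fin N → ℝ) (u v : Fin N → ℂ[X]) (k : Fin N) :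
    rm α (u - v) k = rm α u k - rm α v k := by
  simp [rm, sub_mul]

lemma rm_eval (α : Fin N → ℝ) (A : Matrix (Fin N) (Fin N) ℂ) (i : Fin N) (v : Fin N → ℂ[X]) (x : ℝ)
    (h : ∀ j, A i j = (v j).eval (x:ℂ)) (k : Fin N) :
    (A * Lmat N α x) i k = (rm α v k).eval (x:ℂ) := by
  rw [Matrix.mul_apply, rm, eval_finsetSum]
  simp [h, LP_eval]

/-- sesquilinear form -/
noncomputable def B (α : Fin N → ℝ) (u v : Fin N → ℂ[X]) : ℂ := I (∑ k, rm α u k * cj (rm α v k))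

lemma B_sub_left (α : Fin N → ℝ) (u v w : Fin N → ℂ[X]) :
    B α (u - v) w = B α u w - B α v w := by
  simp [B, rm_sub, sub_mul]

lemma B_add_right (α : Fin N → ℝ) (u v w : Fin N → ℂ[X]) :
    B α u (v + w) = B α u v + B α u w := by
  simp only [B, ← map_add, ← Finset.sum_add_distrib, ← mul_add]
  simp [rm, add_mul, Finset.sum_add_distrib]

lemma B_comb_right (α : Fin N → ℝ) (u : Fin N → ℂ[X]) (a : Fin N → ℂ) (p : Fin N → Fin N → ℂ[X])
    (h : ∀ j, B α u (p j) = 0) :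
    B α u (fun l => ∑ j, C (a j) * p j l) = 0 := by
  have e : ∀ k, rm α (fun l => ∑ j, C (a j) * p j l) k = ∑ j, C (a j) * rm α (p j) k := by
    intro k
    simp only [rm, Finset.sum_mul, Finset.mul_sum]
    rw [Finset.sum_comm]
    simp only [mul_assoc]
  have e2 : (∑ k, rm α u k * cj (rm α (fun l => ∑ j, C (a j) * p j l) k)) =
      ∑ j, C ((starRingEnd ℂ) (a j)) * ∑ k, rm α u k * cj (rm α (p j) k) := by
    simp only [e, map_sum, map_mul, cj_C, Finset.mul_sum]
    rw [Finset.sum_comm]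
    refine Finset.sum_congr rfl fun j _ => Finset.sum_congr rfl fun k _ => by ring
  rw [B, e2, map_sum]
  refine Finset.sum_eq_zero fun j _ => ?_
  rw [I_C_mul]
  have := h j
  rw [B] at this
  rw [this, mul_zero]

lemma B_self (α : Fin N → ℝ) (v : Fin N → ℂ[X]) (h : B α v v = 0) (k : Fin N) (x : ℝ) :
    (rm α v k).eval (x:ℂ) = 0 := by
  rw [B, I_apply] at h
  set f : ℝ → ℝ := fun y => Real.exp (-y^2) * ∑ k, Complex.normSq ((rm α v k).eval (y:ℂ)) with hf
  have hfe : ∀ y : ℝ, (Real.exp (-y^2) : ℂ) * (∑ k, rm α v k * cj (rm α v k)).eval (y:ℂ)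
      = ((f y : ℝ) : ℂ) := by
    intro y
    rw [hf, eval_finsetSum]
    simp only [eval_mul, cj_eval, Complex.mul_conj]
    push_cast
    rfl
  have hi := integrable_poly (∑ k, rm α v k * cj (rm α v k))
  simp only [hfe] at h hi
  rw [integral_complex_ofReal] at h
  have h0 : ∫ y, f y = 0 := by exact_mod_cast h
  have hfi : Integrable f := by simpa using hi.re
  have hnn : 0 ≤ f := fun y => mul_nonneg (Real.exp_pos _).le
    (Finset.sum_nonneg fun k _ => Complex.normSq_nonneg _)
  rw [integral_eq_zero_iff_of_nonneg hnn hfi] at h0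
  have hc : Continuous f := by
    refine Continuous.mul (by fun_prop) (continuous_finsetSum _ fun k _ => ?_)
    exact Complex.continuous_normSq.comp ((rm α v k).continuous.comp Complex.continuous_ofReal)
  have h1 := (hc.ae_eq_iff_eq volume continuous_zero).mp h0
  have h2 := congrFun h1 x
  simp only [hf, Pi.zero_apply, mul_eq_zero, (Real.exp_pos _).ne', false_or] at h2
  rw [Finset.sum_eq_zero_iff_of_nonneg (fun k _ => Complex.normSq_nonneg _)] at h2
  exact Complex.normSq_eq_zero.mp (h2 k (Finset.mem_univ _))

lemma B_lower (α : Fin N → ℝ) (PP : ℕ → Fin N → Fin N → ℂ[X])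
    (hdeg : ∀ n i j, (PP n i j).natDegree ≤ n)
    (hlead : ∀ n i j, (PP n i j).coeff n = if i = j then 1 else 0)
    (n : ℕ) (i : Fin N) (horth : ∀ m, n ≠ m → ∀ j, B α (PP n i) (PP m j) = 0)
    (d : ℕ) (hd : d ≤ n) (v : Fin N → ℂ[X]) (hv : ∀ j, (v j).degree < d) :
    B α (PP n i) v = 0 := by
  induction d generalizing v with
  | zero =>
    have : v = 0 := by
      ext1 j
      simpa using hv j
    simp [B, rm, this]
  | succ d ih =>
    set w : Fin N → ℂ[X] := fun l => ∑ j, C ((v j).coeff d) * PP d j l with hw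
    have e : v = (v - w) + w := by simp
    rw [e, B_add_right, B_comb_right α _ _ _ (horth d (by omega)), add_zero]
    apply ih (by omega)
    intro l
    rw [degree_lt_iff_coeff_zero]
    intro m hm
    rw [Pi.sub_apply, coeff_sub, hw, finsetSum_coeff]
    simp only [coeff_C_mul]
    rcases hm.eq_or_lt with rfl | hm
    · simp [hlead]
    · have h1 := (degree_lt_iff_coeff_zero _ _).mp (hv l) m hm
      rw [h1]
      simp [coeff_eq_zero_of_natDegree_lt ((hdeg d _ _).trans_lt hm)]

lemma cj_deg (p : ℂ[X]) : (cj p).degree ≤ p.degree := by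
  rw [cj, coe_mapRingHom]; exact degree_map_le

lemma B_herm (α : Fin N → ℝ) (n : ℕ) (u v : Fin N → ℂ[X]) (c : Fin N → ℂ)
    (hu : ∀ k : Fin N, rm α u k = C (c k) * K (n + (N - 1 - k)))
    (hv : ∀ j, (v j).degree < n) : B α u v = 0 := by
  rw [B, map_sum]
  refine Finset.sum_eq_zero fun k _ => ?_
  rw [hu, mul_assoc, I_C_mul, I_K, mul_zero]
  refine (cj_deg _).trans_lt ?_
  rw [← mem_degreeLT, rm]
  refine Submodule.sum_mem _ fun j _ => ?_
  rw [mem_degreeLT]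
  by_cases h0 : v j = 0
  · simp only [h0, zero_mul, degree_zero]; exact WithBot.bot_lt_coe _
  · have h1 := hv j
    rw [degree_eq_natDegree h0] at h1
    have h2 : (v j).natDegree < n := by exact_mod_cast h1
    refine degree_le_natDegree.trans_lt ?_
    have := natDegree_mul_le (p := v j) (q := LP α j k)
    have := LP_deg α j k
    exact_mod_cast (show (v j * LP α j k).natDegree < n + (N - 1 - k) by omega)

/-- explicit last row -/
noncomputable def Qr (i0 : Fin N) (α : Fin N → ℝ) (n : ℕ) (j : Fin N) : ℂ[X] :=
  C ((((2:ℝ)^n)⁻¹ * (α i0 / α j) : ℝ) : ℂ) * (Q n).coeff (N - 1 - j)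

lemma conv (n k : ℕ) (hk : k < N) :
    (∑ j : Fin N, if k ≤ (j:ℕ) then (Q n).coeff (N - 1 - j) *
      (C (((((j:ℕ)-k).factorial : ℕ) : ℂ)⁻¹) * K ((j:ℕ)-k)) else 0) =
    C ((((N-1-k).factorial : ℕ) : ℂ)⁻¹) * K (n + (N-1-k)) := by
  have h := congrArg (PowerSeries.coeff (N-1-k)) (Q_mul_R n)
  rw [PowerSeries.coeff_mul] at h
  simp only [R, PowerSeries.coeff_mk, zero_add] at h
  rw [← h, ← Finset.sum_filter]
  refine Finset.sum_bij' (fun j _ => ((N-1-(j:ℕ), (j:ℕ)-k) : ℕ × ℕ))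
    (fun q hq => (⟨q.2 + k, by
      have := Finset.HasAntidiagonal.mem_antidiagonal.mp hq; omega⟩ : Fin N)) ?_ ?_ ?_ ?_ ?_
  · intro j hj
    have := (Finset.mem_filter.mp hj).2
    simp only [Finset.HasAntidiagonal.mem_antidiagonal]
    omega
  · intro q hq
    simp
  · intro j hj
    have := (Finset.mem_filter.mp hj).2
    ext
    simp only
    omega
  · rintro ⟨a, b⟩ hq
    have := Finset.HasAntidiagonal.mem_antidiagonal.mp hq
    simp only [Prod.mk.injEq] at *
    omega
  · intro j hj
    rfl

lemma rm_Qr (i0 : Fin N) (α : Fin N → ℝ) (hα : ∀ j, 0 < α j) (n : ℕ) (k : Fin N) :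
    rm α (Qr i0 α n) k =
    C ((((((2 : ℝ) ^ n)⁻¹ / (Nat.factorial (N - 1 - (k : ℕ)))) *
            (α i0 / α k) : ℝ) : ℂ)) * K (n + (N - 1 - k)) := by
  have h := conv n k k.2
  have e : rm α (Qr i0 α n) k = C ((((2:ℝ)^n)⁻¹ * (α i0 / α k) : ℝ) : ℂ) *
      (C ((((N-1-k).factorial : ℕ) : ℂ)⁻¹) * K (n + (N-1-k))) := by
    rw [← h, rm, Finset.mul_sum]
    refine Finset.sum_congr rfl fun j _ => ?_
    unfold Qr LP
    split_ifs
    · have e2 : (C ((((2:ℝ)^n)⁻¹ * (α i0 / α k) : ℝ) : ℂ) : ℂ[X]) =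
        C ((((2:ℝ)^n)⁻¹ * (α i0 / α j) : ℝ) : ℂ) * C ((α j / α k : ℝ) : ℂ) := by
        rw [← C_mul, ← Complex.ofReal_mul]
        congr 2
        have := (hα j).ne'
        field_simp
      rw [e2]
      ring
    · simp
  rw [e, ← mul_assoc, ← C_mul]
  congr 2
  push_cast
  ring

lemma matIP_eq (α : Fin N → ℝ) (F G : ℝ → Matrix (Fin N) (Fin N) ℂ) (i j : Fin N)
    (u v : Fin N → ℂ[X]) (hu : ∀ l x, F x i l = (u l).eval ((x:ℝ):ℂ))
    (hv : ∀ l x, G x j l = (v l).eval ((x:ℝ):ℂ)) :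
    matIP N (hermW N α) F G i j = B α u v := by
  rw [B, I_apply, matIP, matInt, Matrix.of_apply]
  congr 1
  ext y
  have e : F y * hermW N α y * (G y)ᴴ =
      Real.exp (-y^2) • ((F y * Lmat N α y) * (G y * Lmat N α y)ᴴ) := by
    rw [hermW, Matrix.conjTranspose_mul, Matrix.mul_smul, Matrix.smul_mul]
    simp only [Matrix.mul_assoc]
  rw [e, Matrix.smul_apply, Matrix.mul_apply, eval_finsetSum, Complex.real_smul]
  congr 1
  refine Finset.sum_congr rfl fun k _ => ?_
  rw [Matrix.conjTranspose_apply, rm_eval α _ i u y (fun l => hu l y),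
    rm_eval α _ j v y (fun l => hv l y), eval_mul, cj_eval]
  rfl

lemma monic_poly (n : ℕ) (F : ℝ → Matrix (Fin N) (Fin N) ℂ) (h : IsMonicMatPoly N n F) :
    ∃ p : Fin N → Fin N → ℂ[X], (∀ i j (x : ℝ), F x i j = (p i j).eval (x:ℂ)) ∧
      (∀ i j, (p i j).natDegree ≤ n) ∧ (∀ i j, (p i j).coeff n = if i = j then 1 else 0) := by
  obtain ⟨c, hc, hF⟩ := h
  refine ⟨fun i j => ∑ k ∈ Finset.range (n+1), monomial k (c k i j), ?_, ?_, ?_⟩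
  · intro i j x
    rw [hF, Matrix.sum_apply, eval_finsetSum]
    refine Finset.sum_congr rfl fun k _ => ?_
    simp [mul_comm]
  · intro i j
    refine natDegree_sum_le_of_forall_le _ _ fun k hk => ?_
    have := Finset.mem_range.mp hk
    exact (natDegree_monomial_le _).trans (by omega)
  · intro i j
    rw [finsetSum_coeff]
    simp [coeff_monomial, hc, Matrix.one_apply]

end HLR

/-- **The last row of `P(x,n)L(x)`** (Proposition 5.14 of the paper):
`(P(x,n)L(x))_{N,k} = (2^{−n}/(N−k)!)(α_N/α_k) H_{n+N−k}(x)` (in 1-based indices;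
below the row index is the last index `N−1` in 0-based terms). -/
theorem hermite_last_row_explicit
    (N : ℕ) (hN : 1 ≤ N) (α : Fin N → ℝ) (hα : ∀ j, 0 < α j)
    (P : ℕ → ℝ → Matrix (Fin N) (Fin N) ℂ)
    (hPmonic : ∀ n, IsMonicMatPoly N n (P n))
    (hPorth : ∀ n m, n ≠ m → matIP N (hermW N α) (P n) (P m) = 0)
    (hHpos : ∀ n, (matIP N (hermW N α) (P n) (P n)).PosDef)
    :
    ∀ (n : ℕ) (k : Fin N) (x : ℝ),
      (P n x * Lmat N α x) ⟨N - 1, by omega⟩ k =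
        (((((2 : ℝ) ^ n)⁻¹ / (Nat.factorial (N - 1 - (k : ℕ)))) *
            (α ⟨N - 1, by omega⟩ / α k) *
            hermiteF (n + (N - 1) - (k : ℕ)) x : ℝ) : ℂ) := by
  open HLR Polynomial in
  intro n k x
  choose PP hPe hPd hPl using fun n => monic_poly n (P n) (hPmonic n)
  have horth : ∀ m, n ≠ m → ∀ i j, B α (PP n i) (PP m j) = 0 := by
    intro m hm i j
    rw [← matIP_eq α (P n) (P m) i j _ _ (fun l x => hPe n i l x) (fun l x => hPe m j l x),
      hPorth n m hm]
    rfl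
  set i0 : Fin N := ⟨N - 1, by omega⟩ with hi0
  set D : Fin N → ℂ[X] := PP n i0 - Qr i0 α n with hD
  have hDd : ∀ j, (D j).degree < n := by
    intro j
    rw [degree_lt_iff_coeff_zero]
    intro m hm
    rw [hD, Pi.sub_apply, coeff_sub, Qr, coeff_C_mul]
    rcases hm.eq_or_lt with rfl | hm
    · rw [hPl, (Q_deg n _).2]
      by_cases hj : i0 = j
      · subst hj
        have := (hα i0).ne'
        have h2 : (α i0 : ℂ) ≠ 0 := by exact_mod_cast this
        simp [hi0] at h2 ⊢
        field_simp
        simp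
      · have : N - 1 - (j:ℕ) ≠ 0 := by
          intro h
          apply hj
          ext
          simp only [hi0]
          omega
        simp [hj, this]
    · rw [coeff_eq_zero_of_natDegree_lt ((hPd n _ _).trans_lt hm),
        coeff_eq_zero_of_natDegree_lt ((Q_deg n _).1.trans_lt hm)]
      simp
  have hDD : B α D D = 0 := by
    rw [show B α D D = B α (PP n i0 - Qr i0 α n) D from rfl, B_sub_left,
      B_lower α PP hPd hPl n i0 (fun m hm j => horth m hm i0 j) n le_rfl D hDd,
      B_herm α n _ D _ (rm_Qr i0 α hα n) hDd, sub_zero]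
  have h0 := B_self α D hDD k x
  rw [hD, rm_sub, eval_sub, sub_eq_zero] at h0
  rw [rm_eval α (P n x) i0 (PP n i0) x (fun j => hPe n i0 j x), h0, rm_Qr i0 α hα, eval_mul, eval_C,
    K_eval, ← Complex.ofReal_mul, show n + (N - 1) - (k:ℕ) = n + (N - 1 - k) by omega]
end
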